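/- arXiv:2311.03248 — 4 statements merged into one kernel-verified Lean document; each statement's English description precedes it below -/
import Mathlib

section
/- Let p be an odd prime number different from 7 such that B_7^{(6)}((7p − 3)/2) ≡ 0 (mod 7). Then for all integers n ≥ 0 and t ≥ 0, B_7^{(6)}(7·p^{4t}·n + (7·p^{4t} − 3)/2) ≡ p^{4t}·B_7^{(6)}(7n + 2) (mod 7). -/
/-!
Let `P = ∏ (1 - X ^ m)` and let `a n` be the `n`-th coefficient of `P ^ 12`.

Modulo `7` the generating series of `B 7 6` is `P(X ^ 7) ^ 6 / P ^ 6 = P ^ 36 = P(X ^ 7) ^ 5 * P`.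
By the pentagonal number theorem, the part of `P` supported on exponents congruent to `2` modulo
`7` is `-X ^ 2 * P(X ^ 49)`. Hence `B 7 6 (7 n + 2) ≡ -a n` (`B_eq_neg_coeff`).

The function `η ^ 12 = ∑ a n * q ^ (n + 1 / 2)` is a form of weight `6` on `SL₂(ℤ)` whose
multiplier is the sign character of `SL₂(ℤ/2)` (`slash_F`). For an odd prime `p` its image `G p`
under the Hecke operator at `p` transforms in the same way under `τ ↦ τ + 1` and `τ ↦ -1 / τ`
(`G_add_one`, `G_neg_inv`). As `η` has no zeros and `G p = O(q ^ (1 / 2))`, the quotient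
`G p / η ^ 12` is a modular form of level one and weight zero, so it is constant: `η ^ 12` is an
eigenform (`exists_eigenvalue`). Comparing coefficients gives, with `k = (p - 1) / 2`,
`a (p n + k) + p ^ 5 a ((n - k) / p) = a k * a n` (`az_hecke`), where the second term is absent
unless `n ≡ k` modulo `p`.

The hypothesis says `a k ≡ 0` modulo `7`, since `(7 p - 3) / 2 = 7 k + 2`. The recursion then yields
`a (p ^ 2 n + (p ^ 2 - 1) / 2) ≡ -p ^ 5 a n`, hence
`a (p ^ 4 n + (p ^ 4 - 1) / 2) ≡ p ^ 10 a n ≡ p ^ 4 a n`, and the theorem follows by induction.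
-/

/-- `B ℓ r n` is the number of `ℓ`-regular `r`-multipartitions of `n`:
ordered `r`-tuples `(λ⁽¹⁾, …, λ⁽ʳ⁾)` of partitions, none of whose parts is
divisible by `ℓ`, whose sizes sum to `n`. -/
def B (ℓ r n : ℕ) : ℕ :=
  Fintype.card {f : Fin r → Σ a : Fin (n + 1), Nat.Partition a //
    (∑ i, ((f i).1 : ℕ)) = n ∧ ∀ i, ∀ part ∈ (f i).2.parts, ¬ ℓ ∣ part}

open Complex hiding eta
open UpperHalfPlane hiding I
open PowerSeries Filter Topology ModularForm MatrixGroups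
open scoped Real
open Function

local notation "𝕢" => Periodic.qParam

/-! ### Reduction modulo seven to the twelfth power of the Euler product -/

lemma coeff_pow_congr {R : Type*} [CommRing R] {f g : R⟦X⟧} {n : ℕ}
    (h : ∀ m ≤ n, coeff m f = coeff m g) (r : ℕ) : coeff n (f ^ r) = coeff n (g ^ r) := by
  have h1 : (X : R⟦X⟧) ^ (n + 1) ∣ f - g := by
    rw [X_pow_dvd_iff]
    intro m hm
    rw [map_sub, h m (by omega), sub_self]
  have h2 := X_pow_dvd_iff.1 (h1.trans (sub_dvd_pow_sub_pow f g r)) n (by omega)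
  rwa [map_sub, sub_eq_zero] at h2

/-- The generating series of `B ℓ r` is the `r`-th power of that of the `ℓ`-regular partitions: the
sum over pairs (size at most `n`, partition of that size) truncates the latter, and expanding its
`r`-th power produces exactly the tuples counted by `B`. -/
lemma B_eq_coeff (R : Type*) [CommRing R] (ℓ r n : ℕ) :
    (B ℓ r n : R) =
      coeff n ((PowerSeries.mk fun m ↦ ((Nat.Partition.restricted m (¬ ℓ ∣ ·)).card : R)) ^ r) := by
  classical
  set S : R⟦X⟧ := ∑ x : (Σ a : Fin (n + 1), Nat.Partition a),
    if (∀ part ∈ x.2.parts, ¬ ℓ ∣ part) then X ^ (x.1 : ℕ) else 0 with hS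
  rw [← coeff_pow_congr (f := S)]
  · have h1 : S ^ r = ∏ i : Fin r, S := by simp
    rw [h1, hS, Finset.prod_univ_sum, map_sum, B, Fintype.card_subtype, Finset.card_filter,
      Fintype.piFinset_univ]
    push_cast
    refine Finset.sum_congr rfl fun f _ ↦ ?_
    by_cases hf : ∀ i, ∀ part ∈ (f i).2.parts, ¬ ℓ ∣ part
    · rw [Finset.prod_congr rfl (fun i _ ↦ if_pos (hf i)), Finset.prod_pow_eq_pow_sum, coeff_X_pow]
      have h2 : ((∑ i, ((f i).1 : ℕ)) = n ∧ ∀ i, ∀ part ∈ (f i).2.parts, ¬ ℓ ∣ part) ↔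
          n = ∑ i, ((f i).1 : ℕ) := ⟨fun h ↦ h.1.symm, fun h ↦ ⟨h.symm, hf⟩⟩
      simp only [h2]
    · have hf' := hf
      push Not at hf
      obtain ⟨i, hi⟩ := hf
      rw [Finset.prod_eq_zero (Finset.mem_univ i)]
      · simp only [hf', and_false, if_false]; simp
      · rw [if_neg]; push Not; exact hi
  · intro m hm
    rw [hS, Fintype.sum_sigma, map_sum, coeff_mk]
    rw [Finset.sum_eq_single (⟨m, by omega⟩ : Fin (n + 1))]
    · simp only [Nat.Partition.restricted, Finset.card_filter, map_sum]
      push_cast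
      refine Finset.sum_congr rfl fun x _ ↦ ?_
      split_ifs <;> simp
    · intro b _ hb
      rw [map_sum]
      refine Finset.sum_eq_zero fun x _ ↦ ?_
      split_ifs
      · rw [coeff_X_pow, if_neg]
        rintro rfl
        exact hb rfl
      · simp
    · simp

instance fact7 : Fact (Nat.Prime 7) := ⟨by norm_num⟩

/-- Modulo `7`, the generating series of `7`-regular partitions is `∏ (1 - X ^ m) ^ 6`, because
`1 + y + ⋯ + y ^ 6 ≡ (1 - y) ^ 6`. Here `pentagonalSeries` is the expansion of `∏ (1 - X ^ m)`. -/
lemma restricted_eq_pent :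
    (PowerSeries.mk fun m ↦ ((Nat.Partition.restricted m (¬ 7 ∣ ·)).card : ZMod 7)) =
      pentagonalSeries (ZMod 7) ^ 6 := by
  let _ : TopologicalSpace (ZMod 7) := ⊥
  have _ : DiscreteTopology (ZMod 7) := ⟨rfl⟩
  open scoped PowerSeries.WithPiTopology in
  rw [Nat.Partition.powerSeriesMk_card_restricted_eq_powerSeriesMk_card_countRestricted
    (R := ZMod 7) (m := 7) (by norm_num)]
  open scoped PowerSeries.WithPiTopology in
  have h1 := Nat.Partition.hasProd_powerSeriesMk_card_countRestricted (ZMod 7)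
    (m := 7) (by norm_num)
  open scoped PowerSeries.WithPiTopology in
  have h2 := (PowerSeries.WithPiTopology.hasProd_one_sub_X_pow (ZMod 7)).pow 6
  have h3 : (fun i ↦ ∑ j ∈ Finset.range 7, (X : (ZMod 7)⟦X⟧) ^ ((i + 1) * j)) =
      fun i ↦ (1 - X ^ (i + 1)) ^ 6 := by
    funext i
    have h7 : (7 : (ZMod 7)⟦X⟧) = 0 := by
      have := (map_natCast (C (R := ZMod 7)) 7).symm
      rw [ZMod.natCast_self, map_zero] at this
      exact_mod_cast this
    simp only [pow_mul, Finset.sum_range_succ, Finset.sum_range_zero]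
    generalize (X : (ZMod 7)⟦X⟧) ^ (i + 1) = y
    -- the coefficients are those of `((1 + y + ⋯ + y ^ 6) - (1 - y) ^ 6) / 7`
    linear_combination (y - 2 * y ^ 2 + 3 * y ^ 3 - 2 * y ^ 4 + y ^ 5) * h7
  rw [h3] at h1
  exact h1.unique h2

lemma pow_seven (f : (ZMod 7)⟦X⟧) : f ^ 7 = expand 7 (by norm_num) f := by
  ext n
  rw [coeff_pow_congr (g := (trunc (n + 1) f : (ZMod 7)⟦X⟧)), ← Polynomial.coe_pow,
    ← ZMod.expand_card, Polynomial.coeff_coe, Polynomial.coeff_expand (by norm_num), coeff_expand]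
  · split_ifs
    · rw [coeff_trunc, if_pos]
      have := Nat.div_le_self n 7
      omega
    · rfl
  · intro m hm
    rw [Polynomial.coeff_coe, coeff_trunc, if_pos (by omega)]

/-- The pentagonal numbers congruent to `2` mod `7` are the numbers `49 m + 2` with `m` pentagonal,
and the corresponding signs are opposite. -/
lemma coeff_pent (n : ℕ) : coeff (7 * n + 2) (pentagonalSeries (ZMod 7)) =
    - coeff n (expand 7 (by norm_num) (pentagonalSeries (ZMod 7))) := by
  by_cases h : ∃ k, pentagonal k = 7 * n + 2
  · obtain ⟨k, hk⟩ := h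
    have h1 := two_mul_natCast_pentagonal k
    rw [hk] at h1
    push_cast at h1
    obtain ⟨j, rfl⟩ : ∃ j, k = 7 * j - 1 := by
      -- `k (3 k - 1) ≡ 4` mod `7` has the double root `k ≡ -1`
      have h3 : (7 : ℤ) ∣ (k + 1) ^ 2 := ⟨10 * n + 5 * k + 5 - 2 * (k + 1) ^ 2, by linarith⟩
      obtain ⟨j, hj⟩ := Int.Prime.dvd_pow' (by norm_num : Nat.Prime 7) h3
      exact ⟨j, by push_cast at hj; omega⟩
    have h2 := two_mul_natCast_pentagonal j
    have h3 : n = 7 * pentagonal j := by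
      zify
      linarith
    rw [← hk, coeff_pentagonalSeries_pentagonal, h3, coeff_expand_mul,
      coeff_pentagonalSeries_pentagonal]
    rw [Int.negOnePow_sub, Int.negOnePow_one,
      show 7 * j = 2 * (3 * j) + j by ring, Int.negOnePow_add, Int.negOnePow_two_mul]
    simp
  · rw [coeff_pentagonalSeries_eq_zero, coeff_expand]
    · split_ifs with h7
      · rw [coeff_pentagonalSeries_eq_zero, neg_zero]
        rintro ⟨k, hk⟩
        refine h ⟨7 * k - 1, ?_⟩
        have h1 := two_mul_natCast_pentagonal k
        have h2 := two_mul_natCast_pentagonal (7 * k - 1)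
        have h3 : n = 7 * pentagonal k := by omega
        zify at h3 ⊢
        linarith
      · simp
    · rintro ⟨k, hk⟩
      exact h ⟨k, hk⟩

/-- Modulo `7`, the generating series of `B 7 6` is `P ^ 36 = P(X ^ 7) ^ 5 * P` with
`P = ∏ (1 - X ^ m)`. By `coeff_pent`, its part supported on exponents `≡ 2` mod `7` is obtained
from `-P ^ 5 * P(X ^ 7) = -P ^ 12`. -/
lemma B_eq_neg_coeff (n : ℕ) :
    (B 7 6 (7 * n + 2) : ZMod 7) = - coeff n (pentagonalSeries (ZMod 7) ^ 12) := by
  rw [B_eq_coeff, restricted_eq_pent]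
  set P := pentagonalSeries (ZMod 7) with hP
  have h1 : (P ^ 6) ^ 6 = expand 7 (by norm_num) (P ^ 5) * P := by
    rw [← pow_seven]; ring
  have h2 : P ^ 12 = P ^ 5 * expand 7 (by norm_num) P := by
    rw [← pow_seven]; ring
  rw [h1, h2, coeff_mul, coeff_mul, ← Finset.sum_neg_distrib]
  symm
  refine Finset.sum_of_injOn (fun x ↦ (7 * x.1, 7 * x.2 + 2)) ?_ ?_ ?_ ?_
  · intro x _ y _ h
    simp only [Prod.mk.injEq] at h
    ext <;> omega
  · intro x hx
    rw [Finset.mem_coe, Finset.HasAntidiagonal.mem_antidiagonal] at hx ⊢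
    change 7 * x.1 + (7 * x.2 + 2) = 7 * n + 2
    omega
  · intro x hx hx'
    simp only [Finset.HasAntidiagonal.mem_antidiagonal] at hx
    rw [coeff_expand, if_neg, zero_mul]
    rintro ⟨k, hk⟩
    refine hx' ⟨(k, n - k), ?_, ?_⟩
    · simp only [Finset.mem_coe, Finset.HasAntidiagonal.mem_antidiagonal]
      omega
    · ext <;> simp only <;> omega
  · intro x hx
    simp only
    rw [coeff_expand_mul, coeff_pent, mul_neg]

/-! ### Analytic expansion of the Euler product -/

/-- `f` converges absolutely on the unit disc, with sum `φ`. -/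
def SumsTo (f : ℂ⟦X⟧) (φ : ℂ → ℂ) : Prop :=
  ∀ q : ℂ, ‖q‖ < 1 → (Summable fun n ↦ ‖coeff n f * q ^ n‖) ∧
    HasSum (fun n ↦ coeff n f * q ^ n) (φ q)

lemma SumsTo.mul {f g : ℂ⟦X⟧} {φ ψ : ℂ → ℂ} (hf : SumsTo f φ) (hg : SumsTo g ψ) :
    SumsTo (f * g) (fun q ↦ φ q * ψ q) := by
  intro q hq
  obtain ⟨f1, f2⟩ := hf q hq
  obtain ⟨g1, g2⟩ := hg q hq
  have key (n : ℕ) : coeff n (f * g) * q ^ n = ∑ kl ∈ Finset.HasAntidiagonal.antidiagonal n,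
      (coeff kl.1 f * q ^ kl.1) * (coeff kl.2 g * q ^ kl.2) := by
    rw [coeff_mul, Finset.sum_mul]
    refine Finset.sum_congr rfl fun x hx ↦ ?_
    rw [← Finset.HasAntidiagonal.mem_antidiagonal.1 hx, pow_add]
    ring
  have hs := summable_norm_sum_mul_antidiagonal_of_summable_norm f1 g1
  simp only [key]
  refine ⟨hs, ?_⟩
  rw [← f2.tsum_eq, ← g2.tsum_eq, tsum_mul_tsum_eq_tsum_sum_antidiagonal_of_summable_norm f1 g1]
  exact hs.of_norm.hasSum

lemma SumsTo.pow {f : ℂ⟦X⟧} {φ : ℂ → ℂ} (hf : SumsTo f φ) (k : ℕ) :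
    SumsTo (f ^ k) (fun q ↦ φ q ^ k) := by
  induction k with
  | zero =>
    intro q hq
    simp only [pow_zero, coeff_one, ite_mul, one_mul, zero_mul]
    constructor
    · refine summable_of_ne_finset_zero (s := {0}) fun n hn ↦ ?_
      rw [if_neg (by simpa using hn), norm_zero]
    · convert! hasSum_ite_eq (0 : ℕ) (1 : ℂ) using 2 with n
      split_ifs with h
      · simp [h]
      · rfl
  | succ k ih =>
    simp only [pow_succ]
    exact ih.mul hf

lemma iteratedDeriv_polynomial_eval (Q : Polynomial ℂ) (n : ℕ) :
    iteratedDeriv n (fun q ↦ Q.eval q) = fun q ↦ (Polynomial.derivative^[n] Q).eval q := by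
  induction n with
  | zero => simp
  | succ n ih =>
    rw [iteratedDeriv_succ, ih, Function.iterate_succ_apply']
    funext q
    exact Polynomial.deriv _

/-- Euler's pentagonal number theorem for the analytic product, obtained from the formal one: the
derivatives at `0` of the finite partial products converge, and they are eventually constant. -/
lemma iteratedDeriv_tprod (n : ℕ) :
    iteratedDeriv n (fun q : ℂ ↦ ∏' i, (1 - q ^ (i + 1))) 0 =
      n.factorial * coeff n (pentagonalSeries ℂ) := by
  set F : Finset ℕ → ℂ → ℂ := fun s q ↦ ∏ i ∈ s, (1 - q ^ (i + 1)) with hF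
  have h0 : TendstoLocallyUniformlyOn F (fun q : ℂ ↦ ∏' i, (1 - q ^ (i + 1))) atTop
      (Metric.ball (0 : ℂ) 1) :=
    ModularForm.multipliableLocallyUniformlyOn_one_sub_pow.hasProdLocallyUniformlyOn
  have hd (s) (m : ℕ) : DifferentiableOn ℂ (iteratedDeriv m (F s)) (Metric.ball (0 : ℂ) 1) := by
    have : ContDiff ℂ (m + 1 : ℕ) (F s) := by
      simp only [hF]
      fun_prop
    refine (this.differentiable_iteratedDeriv m ?_).differentiableOn
    exact_mod_cast Nat.lt_succ_self m
  have h1 : ∀ m, TendstoLocallyUniformlyOn (fun s ↦ iteratedDeriv m (F s))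
      (iteratedDeriv m (fun q : ℂ ↦ ∏' i, (1 - q ^ (i + 1)))) atTop (Metric.ball (0 : ℂ) 1) := by
    intro m
    induction m with
    | zero => simpa using h0
    | succ m ih =>
      simp only [iteratedDeriv_succ]
      exact ih.deriv (Eventually.of_forall fun s ↦ hd s m) Metric.isOpen_ball
  have h2 := (h1 n).tendsto_at (Metric.mem_ball_self one_pos)
  refine tendsto_nhds_unique h2 (tendsto_nhds_of_eventually_eq ?_)
  filter_upwards [coeff_prod_one_sub_X_pow_eventually_eq ℂ n] with s hs
  have h3 : F s = fun q ↦ (∏ i ∈ s, (1 - Polynomial.X ^ (i + 1)) : Polynomial ℂ).eval q := by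
    funext q
    simp [hF, Polynomial.eval_prod]
  have h4 : ((∏ i ∈ s, (1 - Polynomial.X ^ (i + 1)) : Polynomial ℂ) : ℂ⟦X⟧) =
      ∏ i ∈ s, (1 - X ^ (i + 1)) := by
    rw [← Polynomial.coeToPowerSeries.ringHom_apply, map_prod]
    simp
  rw [h3, ← hs, ← h4, Polynomial.coeff_coe, iteratedDeriv_polynomial_eval]
  beta_reduce
  rw [← Polynomial.coeff_zero_eq_eval_zero, Polynomial.coeff_iterate_derivative, zero_add,
    Nat.descFactorial_self, nsmul_eq_mul]

lemma sumsTo_pentagonal : SumsTo (pentagonalSeries ℂ) (fun q : ℂ ↦ ∏' i, (1 - q ^ (i + 1))) := by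
  intro q hq
  constructor
  · refine (summable_geometric_of_lt_one (norm_nonneg q) hq).of_nonneg_of_le
      (fun _ ↦ norm_nonneg _) fun n ↦ ?_
    rw [norm_mul, norm_pow]
    refine mul_le_of_le_one_left (by positivity) ?_
    by_cases h : n ∈ Set.range pentagonal
    · obtain ⟨k, rfl⟩ := h
      rw [coeff_pentagonalSeries_pentagonal]
      rcases Int.even_or_odd k with h | h
      · simp [Int.negOnePow_even _ h]
      · simp [Int.negOnePow_odd _ h]
    · simp [coeff_pentagonalSeries_eq_zero ℂ h]
  · have := Complex.hasSum_taylorSeries_on_ball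
      ModularForm.differentiableOn_tprod_one_sub_pow (z := q) (by simpa using hq)
    simp only [iteratedDeriv_tprod, sub_zero, smul_eq_mul] at this
    convert! this using 2 with n
    have : (n.factorial : ℂ) ≠ 0 := by exact_mod_cast n.factorial_ne_zero
    field_simp

/-! ### The twelfth power of the eta function and its multiplier -/

/-- The twelfth power of the Dedekind eta function, as a function on `ℂ`. -/
noncomputable def F (z : ℂ) : ℂ := eta z ^ 12

lemma F_eq (z : ℂ) :
    F z = cexp (π * I * z) * (∏' n : ℕ, (1 - Function.Periodic.qParam 1 z ^ (n + 1))) ^ 12 := by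
  rw [F, eta, mul_pow, Function.Periodic.qParam, ← Complex.exp_nat_mul]
  congr 2
  push_cast
  ring

lemma F_add_one (z : ℂ) : F (z + 1) = - F z := by
  have h : Function.Periodic.qParam 1 (z + 1) = Function.Periodic.qParam 1 z := by
    rw [Function.Periodic.qParam, Function.Periodic.qParam, 
      ← Complex.exp_periodic (2 * π * I * z / (1 : ℝ))]
    congr 1
    push_cast
    ring
  rw [F_eq, F_eq, h, mul_add, mul_one, Complex.exp_add, Complex.exp_pi_mul_I]
  ring

lemma F_add_nat (z : ℂ) (n : ℕ) : F (z + n) = (-1) ^ n * F z := by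
  induction n with
  | zero => simp
  | succ n ih =>
    push_cast
    rw [← add_assoc, F_add_one, ih, pow_succ]
    ring

lemma F_neg_inv {z : ℂ} (hz : 0 < z.im) : F (-1 / z) = - z ^ 6 * F z := by
  have h0 : z ≠ 0 := by rintro rfl; simp at hz
  have he : eta (-1 / z) = (sqrt I)⁻¹ * (sqrt z * eta z) := eta_comp_eq_csqrt_I_inv hz
  have hs (w : ℂ) (hw : w ≠ 0) : sqrt w ^ 12 = w ^ 6 := by
    rw [sqrt_eq_exp hw, ← Complex.exp_nat_mul]
    rw [show ((12 : ℕ) : ℂ) * (Complex.log w / 2) = (6 : ℕ) * Complex.log w by push_cast; ring,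
      Complex.exp_nat_mul, Complex.exp_log hw]
  rw [F, he, mul_pow, mul_pow, inv_pow, hs _ I_ne_zero, hs _ h0, F,
    show I ^ 6 = -1 by rw [show 6 = 4 + 2 by rfl, pow_add, I_pow_four, I_sq, one_mul]]
  ring

lemma F_ne_zero {z : ℂ} (hz : 0 < z.im) : F z ≠ 0 := pow_ne_zero _ (eta_ne_zero hz)

lemma differentiableAt_F {z : ℂ} (hz : 0 < z.im) : DifferentiableAt ℂ F z :=
  (differentiableAt_eta_of_mem_upperHalfPlaneSet hz).fun_pow 12

/-- The sign character of `SL₂(𝔽₂) ≅ S₃`, as a function of the matrix entries. -/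
def sgn2 (a b c d : ZMod 2) : ℤ := if a + d = 1 ∨ (b = 0 ∧ c = 0) then 1 else -1

lemma sgn2_mul : ∀ a b c d a' b' c' d' : ZMod 2, a * d - b * c = 1 → a' * d' - b' * c' = 1 →
    sgn2 (a * a' + b * c') (a * b' + b * d') (c * a' + d * c') (c * b' + d * d') =
      sgn2 a b c d * sgn2 a' b' c' d' := by
  decide

/-- The multiplier of `η ^ 12` at `γ`, which only depends on `γ` modulo `2`. -/
def mult (γ : SL(2, ℤ)) : ℤ := sgn2 (γ 0 0 : ℤ) (γ 0 1 : ℤ) (γ 1 0 : ℤ) (γ 1 1 : ℤ)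

lemma mult_mul (γ δ : SL(2, ℤ)) : mult (γ * δ) = mult γ * mult δ := by
  have h1 (γ : SL(2, ℤ)) :
      ((γ 0 0 : ℤ) : ZMod 2) * (γ 1 1 : ℤ) - (γ 0 1 : ℤ) * (γ 1 0 : ℤ) = 1 := by
    have := γ.det_coe
    rw [Matrix.det_fin_two] at this
    exact_mod_cast congrArg (Int.cast : ℤ → ZMod 2) this
  have := sgn2_mul _ _ _ _ _ _ _ _ (h1 γ) (h1 δ)
  rw [mult, mult, mult, ← this]
  simp [Matrix.mul_apply, Fin.sum_univ_two]

lemma mult_one : mult 1 = 1 := by simp [mult, sgn2]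

lemma slash_T : (fun z : ℍ ↦ F z) ∣[(6 : ℤ)] ModularGroup.T = (-1 : ℂ) • fun z : ℍ ↦ F z := by
  ext z
  rw [SL_slash_apply, modular_T_smul]
  have := F_add_one z
  have h2 : denom ModularGroup.T (z : ℍ) = 1 := by
    rw [ModularGroup.denom_apply]; simp [ModularGroup.T]
  simp [h2, add_comm, this]

lemma slash_S : (fun z : ℍ ↦ F z) ∣[(6 : ℤ)] ModularGroup.S = (-1 : ℂ) • fun z : ℍ ↦ F z := by
  ext z
  rw [SL_slash_apply, modular_S_smul]
  have h0 := z.ne_zero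
  have := F_neg_inv z.2
  have h1 : (-(z : ℂ))⁻¹ = -1 / z := by rw [inv_neg, neg_div, one_div]
  simp only [ModularGroup.denom_S, h1]
  rw [this]
  simp
  field_simp

lemma slash_F (γ : SL(2, ℤ)) :
    (fun z : ℍ ↦ F z) ∣[(6 : ℤ)] γ = (mult γ : ℂ) • fun z : ℍ ↦ F z := by
  have hγ : γ ∈ Subgroup.closure {ModularGroup.S, ModularGroup.T} := by
    rw [SpecialLinearGroup.SL2Z_generators]; trivial
  induction hγ using Subgroup.closure_induction with
  | mem x hx =>
    rcases hx with rfl | rfl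
    · rw [slash_S]; rw [show mult ModularGroup.S = -1 by simp [mult, ModularGroup.S]; decide]
      simp
    · rw [slash_T]; rw [show mult ModularGroup.T = -1 by simp [mult, ModularGroup.T]; decide]
      simp
  | one => simp [mult_one]
  | mul x y _ _ hx hy =>
    rw [SlashAction.slash_mul, hx, SL_smul_slash, hy, mult_mul, smul_smul]
    push_cast; rfl
  | inv x _ hx =>
    have h1 : mult x⁻¹ * mult x = 1 := by rw [← mult_mul, inv_mul_cancel, mult_one]
    have h2 := congrArg (fun f ↦ f ∣[(6 : ℤ)] x⁻¹) hx
    simp only [← SlashAction.slash_mul, mul_inv_cancel, SlashAction.slash_one, SL_smul_slash] at h2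
    conv_rhs => rw [h2]
    rw [smul_smul, ← Int.cast_mul, h1]; simp

/-- Matrices congruent to `!![0, 1; 1, 0]` modulo `2` have multiplier `-1`. -/
lemma F_trans {a b c d : ℤ} (hdet : a * d - b * c = 1) (ha : Even a) (hd : Even d) {z : ℂ}
    (hz : 0 < z.im) :
    F ((a * z + b) / (c * z + d)) = - (c * z + d) ^ 6 * F z := by
  let γ : SL(2, ℤ) := ⟨!![a, b; c, d], by rw [Matrix.det_fin_two_of]; exact hdet⟩
  have h1 := congrFun (slash_F γ) ⟨z, hz⟩
  have h2 : mult γ = -1 := by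
    have ha2 : (a : ZMod 2) = 0 := by rw [ZMod.intCast_eq_zero_iff_even]; exact ha
    have hd2 : (d : ZMod 2) = 0 := by rw [ZMod.intCast_eq_zero_iff_even]; exact hd
    have hb : Odd b := by
      have : Odd (b * c) := by
        obtain ⟨k, rfl⟩ := ha
        exact ⟨k * d - 1, by linarith⟩
      exact Int.odd_mul.1 this |>.1
    have hb2 : (b : ZMod 2) = 1 := by rw [ZMod.intCast_eq_one_iff_odd]; exact hb
    simp [mult, γ, sgn2, ha2, hd2, hb2]
  rw [SL_slash_apply, h2] at h1
  have h3 : denom γ (⟨z, hz⟩ : ℍ) = c * z + d := by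
    rw [ModularGroup.denom_apply]; simp [γ]
  have h4 : ((γ • (⟨z, hz⟩ : ℍ) : ℍ) : ℂ) = (a * z + b) / (c * z + d) := by
    rw [coe_specialLinearGroup_apply]
    simp [γ]
  have h5 : denom γ (⟨z, hz⟩ : ℍ) ≠ 0 := denom_ne_zero _ _
  rw [h4] at h1
  rw [h3] at h1 h5
  simp only [Pi.smul_apply, smul_eq_mul] at h1
  rw [zpow_neg, mul_inv_eq_iff_eq_mul₀ (zpow_ne_zero _ h5)] at h1
  rw [h1]
  push_cast
  rw [zpow_ofNat]
  ring

/-! ### The Hecke operator and its modular transformation laws -/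

/-- The summand `F ((τ + 2 b) / p)` of the Hecke operator at `p`, for a residue class `b`. -/
noncomputable def heckeTerm (p : ℕ) (b : ZMod p) (τ : ℂ) : ℂ := F ((τ + 2 * (b.val : ℂ)) / p)

/-- The image of `η ^ 12` under the Hecke operator at `p`. Translating by `2 b` rather than `b`
accounts for `η ^ 12` having period `2`. -/
noncomputable def G (p : ℕ) [NeZero p] (τ : ℂ) : ℂ :=
  p ^ 5 * F (p * τ) + (1 / p) * ∑ b : ZMod p, heckeTerm p b τ

lemma F_add_two_mul (z : ℂ) (m : ℤ) : F (z + 2 * m) = F z := by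
  have h : ∀ (n : ℕ) (z : ℂ), F (z + 2 * n) = F z := by
    intro n z
    have := F_add_nat z (2 * n)
    push_cast at this
    rw [this, pow_mul]
    simp
  obtain ⟨n, rfl | rfl⟩ := m.eq_nat_or_neg
  · exact_mod_cast h n z
  · rw [← h n]
    push_cast
    ring_nf

/-- `heckeTerm` may be computed with any integer representative of the residue class. -/
lemma heckeTerm_eq {p : ℕ} [NeZero p] (m : ℤ) (τ : ℂ) :
    heckeTerm p (m : ZMod p) τ = F ((τ + 2 * m) / p) := by
  have h0 : (p : ℂ) ≠ 0 := by exact_mod_cast NeZero.ne p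
  obtain ⟨k, hk⟩ : (p : ℤ) ∣ m - ((m : ZMod p).val : ℤ) := by
    rw [← ZMod.intCast_zmod_eq_zero_iff_dvd]
    simp
  have hk' : (m : ℂ) = ((m : ZMod p).val : ℂ) + p * k := by
    have : m = ((m : ZMod p).val : ℤ) + p * k := by linarith
    exact_mod_cast congrArg (Int.cast : ℤ → ℂ) this
  rw [heckeTerm, ← F_add_two_mul _ k, hk']
  congr 1
  field_simp
  ring

lemma G_add_one {p : ℕ} [NeZero p] (hodd : Odd p) (τ : ℂ) : G p (τ + 1) = - G p τ := by
  have h0 : (p : ℂ) ≠ 0 := by exact_mod_cast NeZero.ne p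
  obtain ⟨k, hk⟩ := id hodd
  have h1 : F (p * (τ + 1)) = - F (p * τ) := by
    rw [mul_add, mul_one, F_add_nat, hodd.neg_one_pow, neg_one_mul]
  have h2 (b : ZMod p) : heckeTerm p b (τ + 1) = - heckeTerm p (b - (k : ZMod p)) τ := by
    have h3 : b - (k : ZMod p) = (((b.val : ℤ) - k : ℤ) : ZMod p) := by simp
    rw [h3, heckeTerm_eq, ← F_add_one, heckeTerm]
    congr 1
    have : (p : ℂ) = 2 * k + 1 := by exact_mod_cast congrArg (Nat.cast : ℕ → ℂ) hk
    field_simp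
    rw [this]
    push_cast
    ring
  rw [G, G, h1, Finset.sum_congr rfl (fun b _ ↦ h2 b), Finset.sum_neg_distrib,
    ← (Equiv.subRight (k : ZMod p)).sum_comp (fun b ↦ heckeTerm p b τ)]
  simp only [Equiv.subRight_apply]
  ring

lemma im_pos_div {p : ℕ} (hp : 0 < p) {z : ℂ} (hz : 0 < z.im) (m : ℤ) :
    0 < ((z + 2 * m) / (p : ℂ)).im := by
  have h : (z + 2 * m) / (p : ℂ) = ((1 / p : ℝ) : ℂ) * (z + ((2 * m : ℝ) : ℂ)) := by
    push_cast; ring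
  rw [h, Complex.im_ofReal_mul, Complex.add_im, Complex.ofReal_im, add_zero]
  have : (0 : ℝ) < p := by exact_mod_cast hp
  positivity

lemma im_pos_mul {p : ℕ} (hp : 0 < p) {z : ℂ} (hz : 0 < z.im) : 0 < ((p : ℂ) * z).im := by
  rw [← Complex.ofReal_natCast, Complex.im_ofReal_mul]
  have : (0 : ℝ) < p := by exact_mod_cast hp
  positivity

/-- The inversion `τ ↦ -1 / τ` exchanges the summands for `b` and `b'` when `4 b b' ≡ -1` mod `p`.
With `4 b b' + 1 = p k`, this is the transformation law of `η ^ 12` under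
`!![2 b, -k; p, -2 b']` at the point `(τ + 2 b') / p`. -/
lemma heckeTerm_neg_inv {p : ℕ} [NeZero p] {b b' : ZMod p} (h : 4 * b * b' + 1 = 0) {τ : ℂ}
    (hτ : 0 < τ.im) : heckeTerm p b (-1 / τ) = - τ ^ 6 * heckeTerm p b' τ := by
  have h0 : (p : ℂ) ≠ 0 := by exact_mod_cast NeZero.ne p
  have hτ0 : τ ≠ 0 := by rintro rfl; simp at hτ
  obtain ⟨k, hk⟩ : (p : ℤ) ∣ 4 * b.val * b'.val + 1 := by
    rw [← ZMod.intCast_zmod_eq_zero_iff_dvd]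
    push_cast
    simpa using h
  have hk' : (4 * b.val * b'.val + 1 : ℂ) = p * k := by
    exact_mod_cast congrArg (Int.cast : ℤ → ℂ) hk
  have h1 := F_trans (a := 2 * b.val) (b := -k) (c := p) (d := - (2 * b'.val)) (by linarith)
    (even_two_mul _) (even_two_mul _).neg (im_pos_div (NeZero.pos p) hτ b'.val)
  have h2 : (((p : ℤ) : ℂ) * ((τ + 2 * ((b'.val : ℤ) : ℂ)) / p) +
      ((- (2 * (b'.val : ℤ)) : ℤ) : ℂ)) = τ := by
    push_cast
    field_simp
    ring
  rw [h2] at h1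
  rw [heckeTerm, heckeTerm, ← Int.cast_natCast b'.val, ← h1]
  congr 1
  push_cast
  field_simp
  linear_combination -hk'

/-- The inversion exchanges `p ^ 5 F (p τ)` with the summand for `b = 0`, and permutes the summands
for nonzero `b`. -/
lemma G_neg_inv {p : ℕ} [Fact p.Prime] (hodd : Odd p) {τ : ℂ} (hτ : 0 < τ.im) :
    G p (-1 / τ) = - τ ^ 6 * G p τ := by
  have hp : 0 < p := NeZero.pos p
  have h0 : (p : ℂ) ≠ 0 := by exact_mod_cast NeZero.ne p
  have hτ0 : τ ≠ 0 := by rintro rfl; simp at hτ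
  have h4 : (4 : ZMod p) ≠ 0 := by
    intro h
    have h' : ((4 : ℕ) : ZMod p) = 0 := by exact_mod_cast h
    rw [ZMod.natCast_eq_zero_iff] at h'
    have h2 : p ∣ 2 := (Fact.out : p.Prime).dvd_of_dvd_pow (show p ∣ 2 ^ 2 by simpa using h')
    rw [Nat.prime_dvd_prime_iff_eq Fact.out Nat.prime_two] at h2
    subst h2
    exact absurd hodd (by decide)
  have h1 : F (p * (-1 / τ)) = - (τ / p) ^ 6 * heckeTerm p 0 τ := by
    have := F_neg_inv (z := (τ + 2 * (0 : ℤ)) / p) (im_pos_div hp hτ 0)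
    have h5 : (p : ℂ) * (-1 / τ) = -1 / (τ / p) := by field_simp
    rw [heckeTerm, h5]
    simpa using this
  have h2 : heckeTerm p 0 (-1 / τ) = - (p * τ) ^ 6 * F (p * τ) := by
    rw [← F_neg_inv (im_pos_mul hp hτ), heckeTerm]
    congr 1
    simp
    field_simp
  -- `σ` is an involution of all of `ZMod p`, since `0⁻¹ = 0`
  set σ : ZMod p → ZMod p := fun b ↦ - (4 * b)⁻¹ with hσ
  have hσσ (b : ZMod p) : σ (σ b) = b := by
    simp only [hσ, mul_neg, mul_inv, inv_neg, neg_neg, inv_inv]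
    field_simp
  have hσ0 (b : ZMod p) (hb : b ≠ 0) : σ b ≠ 0 := by
    simp [hσ, h4, hb]
  have h3 : ∑ b ∈ Finset.univ.erase 0, heckeTerm p b (-1 / τ) =
      - τ ^ 6 * ∑ b ∈ Finset.univ.erase 0, heckeTerm p b τ := by
    rw [Finset.mul_sum]
    refine Finset.sum_nbij' σ σ ?_ ?_ ?_ ?_ ?_
    · intro b hb; simpa using hσ0 b (Finset.ne_of_mem_erase hb)
    · intro b hb; simpa using hσ0 b (Finset.ne_of_mem_erase hb)
    · intro b _; exact hσσ b
    · intro b _; exact hσσ b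
    · intro b hb
      have hb0 := Finset.ne_of_mem_erase hb
      refine heckeTerm_neg_inv ?_ hτ
      simp only [hσ]
      field_simp
      ring
  rw [G, G, h1, ← Finset.add_sum_erase _ _ (Finset.mem_univ 0), h2, h3,
    ← Finset.add_sum_erase Finset.univ (fun b ↦ heckeTerm p b τ) (Finset.mem_univ 0)]
  field_simp
  ring

/-! ### Expansions in powers of q and the eigenform property -/

/-- The `n`-th coefficient of `∏ (1 - q ^ m) ^ 12`, as a complex number. -/
noncomputable def ac (n : ℕ) : ℂ := PowerSeries.coeff n (pentagonalSeries ℂ ^ 12)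

lemma norm_qParam_one_lt {z : ℂ} (hz : 0 < z.im) : ‖𝕢 1 z‖ < 1 :=
  Periodic.norm_qParam_lt_one one_pos hz

lemma exp_mul_qParam_pow (z : ℂ) (n : ℕ) :
    cexp (π * I * z) * 𝕢 1 z ^ n = cexp (π * I * ((2 * n + 1) * z)) := by
  rw [Periodic.qParam, ← Complex.exp_nat_mul, ← Complex.exp_add]
  congr 1
  push_cast
  ring

/-- The expansion of `η ^ 12` in powers of `e ^ (π i z)`, which has only odd exponents. -/
lemma hasSum_F {z : ℂ} (hz : 0 < z.im) :
    HasSum (fun n : ℕ ↦ ac n * cexp (π * I * ((2 * n + 1) * z))) (F z) := by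
  have h := ((sumsTo_pentagonal.pow 12) (𝕢 1 z) (norm_qParam_one_lt hz)).2.mul_left
    (cexp (π * I * z))
  rw [F_eq]
  convert! h using 2 with n
  rw [← exp_mul_qParam_pow, ac]
  ring

/-- The coefficients of the image of `η ^ 12` under the Hecke operator at `p`: the series `G p` is
`∑ dc p n * q ^ (n + 1 / 2)`. The second term lives on the exponents `n = p m + (p - 1) / 2`. -/
noncomputable def dc (p n : ℕ) : ℂ :=
  ac (p * n + (p - 1) / 2) + if n % p = (p - 1) / 2 then (p : ℂ) ^ 5 * ac (n / p) else 0

lemma hasSum_F_mul {p : ℕ} (hp : 0 < p) (hodd : Odd p) {τ : ℂ} (hτ : 0 < τ.im) :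
    HasSum (fun n : ℕ ↦ (if n % p = (p - 1) / 2 then (p : ℂ) ^ 5 * ac (n / p) else 0) *
      cexp (π * I * ((2 * n + 1) * τ))) (p ^ 5 * F (p * τ)) := by
  obtain ⟨k, rfl⟩ := hodd
  have hk : (2 * k + 1 - 1) / 2 = k := by omega
  rw [hk]
  have hinj : Injective (fun m : ℕ ↦ (2 * k + 1) * m + k) := fun a b h ↦ by
    simpa using h
  rw [← hinj.hasSum_iff]
  · convert! (hasSum_F (im_pos_mul hp hτ)).mul_left (((2 * k + 1 : ℕ) : ℂ) ^ 5) using 2 with m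
    have h1 : ((2 * k + 1) * m + k) % (2 * k + 1) = k := by
      rw [Nat.mul_add_mod, Nat.mod_eq_of_lt (by omega)]
    have h2 : ((2 * k + 1) * m + k) / (2 * k + 1) = m := by
      rw [Nat.mul_add_div (by omega), Nat.div_eq_of_lt (by omega), add_zero]
    simp only [comp_apply, h1, h2, if_true, mul_assoc]
    congr 4
    push_cast
    ring
  · intro n hn
    rw [if_neg, zero_mul]
    intro h
    exact hn ⟨n / (2 * k + 1), by have := Nat.div_add_mod n (2 * k + 1); simp only; omega⟩

lemma sum_exp {p : ℕ} [Fact p.Prime] (N : ℕ) :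
    ∑ b : ZMod p, cexp (2 * π * I * (b.val * N) / p) = if p ∣ N then (p : ℂ) else 0 := by
  have h1 := AddChar.sum_mulShift (N : ZMod p) (ZMod.isPrimitive_stdAddChar p)
  rw [ZMod.card] at h1
  simp only [ZMod.natCast_eq_zero_iff] at h1
  push_cast at h1
  rw [← h1]
  refine Finset.sum_congr rfl fun b _ ↦ ?_
  have h2 : b * (N : ZMod p) = (((b.val : ℤ) * N : ℤ) : ZMod p) := by simp
  rw [h2, ZMod.stdAddChar_coe]
  push_cast
  rfl

/-- Averaging over `b` keeps the exponents divisible by `p`. -/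
lemma hasSum_heckeTerm {p : ℕ} [Fact p.Prime] (hodd : Odd p) {τ : ℂ} (hτ : 0 < τ.im) :
    HasSum (fun n : ℕ ↦ ac (p * n + (p - 1) / 2) * cexp (π * I * ((2 * n + 1) * τ)))
      ((1 / p) * ∑ b : ZMod p, heckeTerm p b τ) := by
  have hp : 0 < p := NeZero.pos p
  have h0 : (p : ℂ) ≠ 0 := by exact_mod_cast NeZero.ne p
  have h1 : HasSum (fun m : ℕ ↦ (1 / (p : ℂ)) * ∑ b : ZMod p,
      ac m * cexp (π * I * ((2 * m + 1) * ((τ + 2 * ((b.val : ℤ) : ℂ)) / p))))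
      ((1 / p) * ∑ b : ZMod p, heckeTerm p b τ) :=
    (hasSum_sum fun b _ ↦ hasSum_F (im_pos_div hp hτ b.val)).mul_left _
  have h2 : (fun m : ℕ ↦ (1 / (p : ℂ)) * ∑ b : ZMod p,
      ac m * cexp (π * I * ((2 * m + 1) * ((τ + 2 * ((b.val : ℤ) : ℂ)) / p)))) =
      fun m : ℕ ↦ if p ∣ 2 * m + 1 then ac m * cexp (π * I * ((2 * m + 1) * (τ / p))) else 0 := by
    funext m
    have h3 (b : ZMod p) : ac m * cexp (π * I * ((2 * m + 1) * ((τ + 2 * ((b.val : ℤ) : ℂ)) / p))) =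
        ac m * cexp (π * I * ((2 * m + 1) * (τ / p))) *
          cexp (2 * π * I * (b.val * (2 * m + 1 : ℕ)) / p) := by
      rw [mul_assoc (ac m), ← Complex.exp_add]
      congr 2
      push_cast
      ring
    rw [Finset.sum_congr rfl fun b _ ↦ h3 b, ← Finset.mul_sum, sum_exp]
    split_ifs
    · field_simp
    · simp
  rw [h2] at h1
  obtain ⟨k, hk⟩ := id hodd
  have hk' : (p - 1) / 2 = k := by omega
  rw [hk']
  have hinj : Injective (fun m : ℕ ↦ p * m + k) := fun a b h ↦ by
    simpa [hp.ne'] using h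
  rw [← hinj.hasSum_iff] at h1
  · convert! h1 using 2 with n
    have h4 : 2 * (p * n + k) + 1 = p * (2 * n + 1) := by rw [hk]; ring
    simp only [comp_apply, h4, dvd_mul_right, if_true]
    congr 3
    have h5 : (2 * (p * n + k : ℕ) + 1 : ℂ) = p * (2 * n + 1) := by exact_mod_cast h4
    rw [h5]
    field_simp
  · intro m hm
    rw [if_neg]
    rintro ⟨j, hj⟩
    have hjo : Odd j := by
      have : Odd (p * j) := ⟨m, hj.symm⟩
      exact (Nat.odd_mul.1 this).2
    obtain ⟨n, rfl⟩ := hjo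
    refine hm ⟨n, ?_⟩
    simp only
    have : p * (2 * n + 1) = 2 * (p * n) + p := by ring
    omega

lemma hasSum_G {p : ℕ} [Fact p.Prime] (hodd : Odd p) {τ : ℂ} (hτ : 0 < τ.im) :
    HasSum (fun n : ℕ ↦ dc p n * cexp (π * I * ((2 * n + 1) * τ))) (G p τ) := by
  rw [G, add_comm]
  convert! (hasSum_heckeTerm hodd hτ).add (hasSum_F_mul (NeZero.pos p) hodd hτ) using 2 with n
  rw [dc, add_mul]

lemma differentiableAt_G {p : ℕ} [NeZero p] {τ : ℂ} (hτ : 0 < τ.im) :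
    DifferentiableAt ℂ (G p) τ := by
  have hp : 0 < p := NeZero.pos p
  have h1 : DifferentiableAt ℂ (fun τ ↦ F (p * τ)) τ :=
    DifferentiableAt.comp τ (differentiableAt_F (im_pos_mul hp hτ)) (by fun_prop)
  have h2 (b : ZMod p) : DifferentiableAt ℂ (fun τ ↦ heckeTerm p b τ) τ :=
    DifferentiableAt.comp τ (g := F) (f := fun τ ↦ (τ + 2 * ((b.val : ℤ) : ℂ)) / p)
      (differentiableAt_F (im_pos_div hp hτ b.val)) (by fun_prop)
  unfold G
  fun_prop

lemma isBounded_G_div_F {p : ℕ} [Fact p.Prime] (hodd : Odd p) :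
    IsBoundedAtImInfty (fun z : ℍ ↦ G p z / F z) := by
  have h1 : IsBoundedAtImInfty (fun z : ℍ ↦ G p z / cexp (π * I * z)) := by
    refine isBoundedAtImInfty_of_hasSum_qExpansion (h := 1) (c := dc p) one_pos fun τ ↦ ?_
    convert! (hasSum_G hodd τ.2).div_const (cexp (π * I * τ)) using 2 with n
    rw [← exp_mul_qParam_pow, smul_eq_mul]
    field_simp
  have h2 : Tendsto (fun z : ℍ ↦ ((∏' n : ℕ, (1 - 𝕢 1 z ^ (n + 1))) ^ 12)⁻¹) atImInfty (𝓝 1) := by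
    have h3 : Tendsto (fun q : ℂ ↦ ∏' n : ℕ, (1 - q ^ (n + 1))) (𝓝 0) (𝓝 1) := by
      have := (differentiableOn_tprod_one_sub_pow.continuousOn.continuousAt
        (Metric.ball_mem_nhds (0 : ℂ) one_pos)).tendsto
      simpa using this
    have h4 := ((h3.comp (qParam_tendsto_atImInfty one_pos)).pow 12).inv₀ (by simp)
    simpa using! h4
  have h5 : (fun z : ℍ ↦ G p z / F z) = fun z : ℍ ↦ (G p z / cexp (π * I * z)) *
      ((∏' n : ℕ, (1 - 𝕢 1 z ^ (n + 1))) ^ 12)⁻¹ := by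
    funext z
    rw [F_eq, div_mul_eq_div_div, div_eq_mul_inv (_ / _)]
  rw [h5]
  have := Asymptotics.IsBigO.mul h1 (h2.isBigO_one ℝ)
  simp only [mul_one] at this
  exact this

/-- The quotient of the Hecke image of `η ^ 12` by `η ^ 12`, a modular form of level one and
weight zero. -/
noncomputable def heckeQuotient (p : ℕ) [Fact p.Prime] (hodd : Odd p) : ModularForm 𝒮ℒ 0 :=
  have hS : (fun z : ℍ ↦ G p z / F z) ∣[(0 : ℤ)] ModularGroup.S = fun z : ℍ ↦ G p z / F z := by
    ext z
    have h0 := z.ne_zero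
    have h1 : (-(z : ℂ))⁻¹ = -1 / z := by rw [inv_neg, neg_div, one_div]
    rw [SL_slash_apply, modular_S_smul]
    simp only [h1, neg_zero, zpow_zero, mul_one]
    rw [F_neg_inv z.2, G_neg_inv hodd z.2, mul_div_mul_left]
    exact neg_ne_zero.2 (pow_ne_zero _ h0)
  have hT : (fun z : ℍ ↦ G p z / F z) ∣[(0 : ℤ)] ModularGroup.T = fun z : ℍ ↦ G p z / F z := by
    ext z
    rw [SL_slash_apply, modular_T_smul]
    simp [add_comm (1 : ℂ), F_add_one, G_add_one hodd]
  { toFun := fun z : ℍ ↦ G p z / F z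
    slash_action_eq' := by
      rintro A ⟨A, rfl⟩
      exact SlashInvariantForm.slash_action_generators_SL2Z hS hT A
    holo' := by
      rw [UpperHalfPlane.mdifferentiable_iff]
      refine .congr (f := fun z ↦ G p z / F z) (fun z hz ↦ ((differentiableAt_G hz).div
        (differentiableAt_F hz) (F_ne_zero hz)).differentiableWithinAt) fun z hz ↦ ?_
      simp [ofComplex_apply_of_im_pos hz]
    bdd_at_cusps' := by
      intro c hc
      rw [Subgroup.IsArithmetic.isCusp_iff_isCusp_SL2Z] at hc
      rw [OnePoint.isBoundedAt_iff_forall_SL2Z hc]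
      intro γ _
      rw [SlashInvariantForm.slash_action_generators_SL2Z hS hT]
      exact isBounded_G_div_F hodd }

/-- `η ^ 12` is an eigenform of the Hecke operator at `p`: the quotient `heckeQuotient` is constant,
and expansions in powers of `q` are unique. -/
lemma exists_eigenvalue (p : ℕ) [Fact p.Prime] (hodd : Odd p) :
    ∃ c : ℂ, ∀ n, dc p n = c * ac n := by
  obtain ⟨c, hc⟩ := ModularFormClass.levelOne_weight_zero_const (heckeQuotient p hodd)
  refine ⟨c, fun n ↦ ?_⟩
  have h1 (z : ℍ) : G p z = c * F z := by
    have : G p z / F z = c := congrFun hc z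
    rwa [div_eq_iff (F_ne_zero z.2)] at this
  have hcusp : cuspFunction 1 (0 : ℍ → ℂ) = 0 := by
    simpa [cuspFunction, Periodic.cuspFunction]
      using! (tendsto_const_nhds.mono_left nhdsWithin_le_nhds).limUnder_eq
  have h2 := (UpperHalfPlane.hasFPowerSeriesOnBall_cuspFunction (h := 1) (f := (0 : ℍ → ℂ))
    (c := fun n ↦ dc p n - c * ac n) one_pos (by rw [hcusp]; exact analyticAt_const) (fun τ ↦ by
      have h3 := (((hasSum_G hodd τ.2).sub ((hasSum_F τ.2).mul_left c)).div_const
        (cexp (π * I * τ)))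
      rw [h1, sub_self, zero_div] at h3
      rw [Pi.zero_apply]
      convert! h3 using 2 with m
      rw [← exp_mul_qParam_pow, smul_eq_mul]
      field_simp)).hasFPowerSeriesAt
  rw [hcusp] at h2
  have h4 := congrArg (FormalMultilinearSeries.coeff · n) h2.eq_zero
  have h5 : (0 : FormalMultilinearSeries ℂ ℂ ℂ).coeff n = 0 := by
    simp [FormalMultilinearSeries.coeff]
  simpa [h5, sub_eq_zero] using h4

/-! ### Congruences for the coefficients -/

lemma map_pentagonalSeries {R S : Type*} [CommRing R] [CommRing S] (f : R →+* S) :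
    PowerSeries.map f (pentagonalSeries R) = pentagonalSeries S := by
  ext n
  rw [coeff_map]
  by_cases h : n ∈ Set.range pentagonal
  · obtain ⟨k, rfl⟩ := h
    simp [coeff_pentagonalSeries_pentagonal]
  · rw [coeff_pentagonalSeries_eq_zero R h, coeff_pentagonalSeries_eq_zero S h, map_zero]

/-- The `n`-th coefficient of `∏ (1 - q ^ m) ^ 12`. -/
noncomputable def az (n : ℕ) : ℤ := coeff n (pentagonalSeries ℤ ^ 12)

lemma cast_az (R : Type*) [CommRing R] (n : ℕ) :
    (az n : R) = coeff n (pentagonalSeries R ^ 12) := by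
  rw [az, ← map_pentagonalSeries (Int.castRingHom R), ← map_pow, coeff_map]
  rfl

lemma az_zero : az 0 = 1 := by
  have h : coeff 0 (pentagonalSeries ℤ) = 1 := by
    have h := coeff_pentagonalSeries_pentagonal ℤ 0
    rw [show pentagonal 0 = 0 by decide] at h
    rw [h]
    simp
  rw [az, coeff_zero_eq_constantCoeff_apply, map_pow, ← coeff_zero_eq_constantCoeff_apply, h,
    one_pow]

/-- Since `η ^ 12` is an eigenform of the Hecke operator at `p`, its coefficients satisfy the
corresponding recursion. -/
lemma az_hecke {p : ℕ} (hp : p.Prime) (hodd : Odd p) (n : ℕ) :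
    az (p * n + (p - 1) / 2) + (if n % p = (p - 1) / 2 then (p : ℤ) ^ 5 * az (n / p) else 0) =
      az ((p - 1) / 2) * az n := by
  have : Fact p.Prime := ⟨hp⟩
  obtain ⟨c, hc⟩ := exists_eigenvalue p hodd
  have hac (n : ℕ) : ac n = az n := (cast_az ℂ n).symm
  have h2 := hp.two_le
  obtain ⟨k, hk⟩ := id hodd
  have h0 := hc 0
  rw [dc, if_neg (by rw [Nat.zero_mod]; omega), hac, hac, az_zero] at h0
  have hn := hc n
  rw [dc, hac, hac, hac] at hn
  simp only [mul_zero, zero_add, add_zero, Int.cast_one, mul_one] at h0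
  rw [← h0] at hn
  have h3 : ((az (p * n + (p - 1) / 2) +
      (if n % p = (p - 1) / 2 then (p : ℤ) ^ 5 * az (n / p) else 0) : ℤ) : ℂ) =
      ((az ((p - 1) / 2) * az n : ℤ) : ℂ) := by
    push_cast
    exact hn
  exact_mod_cast h3

/-- If the eigenvalue at `p` vanishes modulo `7`, applying the recursion four times multiplies the
coefficient by `p ^ 10`, which is `p ^ 4` by Fermat's little theorem. -/
lemma az_mod_seven {p : ℕ} (hp : p.Prime) (hodd : Odd p) (hp7 : p ≠ 7)
    (h : (az ((p - 1) / 2) : ZMod 7) = 0) (n t : ℕ) :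
    (az (p ^ (4 * t) * n + (p ^ (4 * t) - 1) / 2) : ZMod 7) = p ^ (4 * t) * az n := by
  obtain ⟨k, hk⟩ := id hodd
  have hk2 : (p - 1) / 2 = k := by omega
  have hpos := hp.pos
  rw [hk2] at h
  -- with vanishing eigenvalue, the recursion at `p n + k` relates `az` at `p ^ 2 n + ⋯` and `n`
  have h2 (n : ℕ) : (az (p * (p * n + k) + k) : ZMod 7) = - (p : ZMod 7) ^ 5 * az n := by
    have h1 := az_hecke hp hodd (p * n + k)
    have hm : (p * n + k) % p = k := by rw [Nat.mul_add_mod, Nat.mod_eq_of_lt (by omega)]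
    have hd : (p * n + k) / p = n := by
      rw [Nat.mul_add_div hpos, Nat.div_eq_of_lt (by omega), add_zero]
    rw [hk2, hm, if_pos rfl, hd] at h1
    have h1' := congrArg (Int.cast : ℤ → ZMod 7) h1
    push_cast at h1'
    rw [h, zero_mul] at h1'
    linear_combination h1'
  have h6 : (p : ZMod 7) ^ 6 = 1 := by
    refine ZMod.pow_card_sub_one_eq_one (p := 7) ?_
    rw [Ne, ZMod.natCast_eq_zero_iff, Nat.prime_dvd_prime_iff_eq (by norm_num) hp]
    exact fun h ↦ hp7 h.symm
  have h4 (n : ℕ) : (az (p ^ 4 * n + (p ^ 4 - 1) / 2) : ZMod 7) = p ^ 4 * az n := by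
    have he : p ^ 4 * n + (p ^ 4 - 1) / 2 = p * (p * (p * (p * n + k) + k) + k) + k := by
      have : (p ^ 4 - 1) / 2 = p ^ 3 * k + p ^ 2 * k + p * k + k := by
        have : p ^ 4 = 2 * (p ^ 3 * k + p ^ 2 * k + p * k + k) + 1 := by rw [hk]; ring
        omega
      rw [this]
      ring
    rw [he, h2, h2]
    linear_combination (p : ZMod 7) ^ 4 * az n * h6
  induction t generalizing n with
  | zero => simp
  | succ t ih =>
    have hodd4 : ∀ j, ∃ m, p ^ j = 2 * m + 1 := fun j ↦ hodd.pow
    obtain ⟨m, hm⟩ := hodd4 (4 * t)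
    obtain ⟨m', hm'⟩ := hodd4 4
    have he : p ^ (4 * (t + 1)) * n + (p ^ (4 * (t + 1)) - 1) / 2 =
        p ^ 4 * (p ^ (4 * t) * n + (p ^ (4 * t) - 1) / 2) + (p ^ 4 - 1) / 2 := by
      have e1 : p ^ (4 * (t + 1)) = p ^ 4 * p ^ (4 * t) := by ring
      have e2 : (p ^ (4 * t) - 1) / 2 = m := by omega
      have e3 : (p ^ 4 - 1) / 2 = m' := by omega
      have e4 : (p ^ 4 * p ^ (4 * t) - 1) / 2 = p ^ 4 * m + m' := by
        have : p ^ 4 * p ^ (4 * t) = 2 * (p ^ 4 * m + m') + 1 := by rw [hm, hm']; ring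
        omega
      rw [e1, e2, e3, e4]
      ring
    rw [he, h4, ih]
    ring

theorem stmt_6 (p : ℕ) (hp : Nat.Prime p) (hodd : Odd p) (hp7 : p ≠ 7)
    (h : B 7 6 ((7 * p - 3) / 2) ≡ 0 [MOD 7]) (n t : ℕ) :
    B 7 6 (7 * p ^ (4 * t) * n + (7 * p ^ (4 * t) - 3) / 2) ≡
      p ^ (4 * t) * B 7 6 (7 * n + 2) [MOD 7] := by
  have hB (n : ℕ) : (B 7 6 (7 * n + 2) : ZMod 7) = - (az n : ZMod 7) := by
    rw [B_eq_neg_coeff, cast_az]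
  rw [← ZMod.natCast_eq_natCast_iff] at h ⊢
  obtain ⟨k, hk⟩ := id hodd
  obtain ⟨m, hm⟩ : Odd (p ^ (4 * t)) := hodd.pow
  have e1 : (7 * p - 3) / 2 = 7 * ((p - 1) / 2) + 2 := by omega
  have e2 : 7 * p ^ (4 * t) * n + (7 * p ^ (4 * t) - 3) / 2 =
      7 * (p ^ (4 * t) * n + (p ^ (4 * t) - 1) / 2) + 2 := by
    rw [mul_add, mul_assoc]
    omega
  rw [e1, hB, Nat.cast_zero, neg_eq_zero] at h
  rw [e2, hB, az_mod_seven hp hodd hp7 h]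
  push_cast
  rw [hB]
  ring
end

section
/- Let p be a prime number different from 5 with p ≡ 2 (mod 3) and let j be a positive even integer not divisible by p. Then for all integers n ≥ 0 and t ≥ 0, B_5^{(10)}(10·p^{2t+2}·n + 5·(p^{2t+1}·(4p + 3j) − 1)/3) ≡ 0 (mod 10). -/
namespace EtaEight

open PowerSeries

instance : Fact (Nat.Prime 5) := ⟨by norm_num⟩

/-- Power series in `q = X` over the field with five elements. -/
abbrev S := PowerSeries (ZMod 5)

/-- The Euler product `∏ (1 - q^m)` over `𝔽₅`, encoded by its pentagonal number expansion. -/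
noncomputable abbrev E : S := pentagonalSeries (ZMod 5)

/-- The sign `(-1)^k` for an integer `k`, as a power series. -/
noncomputable def sg (k : ℤ) : S := ((Int.negOnePow k : ℤ) : S)

lemma sg_add (a b : ℤ) : sg (a + b) = sg a * sg b := by
  simp [sg, Int.negOnePow_add]

@[simp] lemma sg_zero : sg 0 = 1 := by simp [sg]

@[simp] lemma sg_one : sg 1 = -1 := by simp [sg]

@[simp] lemma sg_neg (a : ℤ) : sg (-a) = sg a := by
  simp [sg, Int.negOnePow_neg]

lemma sg_sub (a b : ℤ) : sg (a - b) = sg a * sg b := by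
  rw [sub_eq_add_neg, sg_add, sg_neg]

lemma sg_mul_self (a : ℤ) : sg a * sg a = 1 := by
  rw [← sg_sub]; simp

/-- The triangular number `k(k-1)/2`, for an integer `k`. -/
def T (k : ℤ) : ℕ := (k * (k - 1) / 2).toNat

lemma two_mul_T (k : ℤ) : 2 * (T k : ℤ) = k * (k - 1) := by
  have h : (2 : ℤ) ∣ k * (k - 1) := by
    have := Int.even_mul_pred_self k
    exact this.two_dvd
  have h0 : 0 ≤ k * (k - 1) := by
    rcases le_or_gt k 0 with hk | hk
    · nlinarith
    · exact mul_nonneg hk.le (by omega)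
  rw [T, Int.toNat_of_nonneg (by positivity)]
  omega

lemma T_one_sub (k : ℤ) : T (1 - k) = T k := by
  have h1 := two_mul_T k
  have h2 := two_mul_T (1 - k)
  have : (1 - k) * (1 - k - 1) = k * (k - 1) := by ring
  omega

lemma le_T_add (k : ℤ) : k ≤ T k + 1 := by
  have h1 := two_mul_T k
  rcases le_or_gt k 0 with hk | hk
  · omega
  · nlinarith [mul_nonneg (sub_nonneg.2 (show (1:ℤ) ≤ k by omega)) (sub_nonneg.2 (show (1:ℤ) ≤ k by omega)),
      sq_nonneg (2 * k - 3), Int.emod_two_eq k, show 0 ≤ (k - 1) * (k - 2) by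
        rcases le_or_gt k 1 with h | h
        · have : k = 1 := by omega
          simp [this]
        · exact mul_nonneg (by omega) (by omega)]

lemma neg_le_T (k : ℤ) : -k ≤ T k := by
  have h1 := le_T_add (1 - k)
  rw [T_one_sub] at h1
  omega

/-! ### Jacobi's identity for the cube of the Euler product -/

/-- The finite product `∏_{m ≤ n} (1 - q^m)`. -/
noncomputable def Q (n : ℕ) : S := ∏ i ∈ Finset.range n, (1 - X ^ (i + 1))

lemma Q_succ (n : ℕ) : Q (n + 1) = Q n * (1 - X ^ (n + 1)) := Finset.prod_range_succ _ _

@[simp] lemma Q_zero : Q 0 = 1 := by simp [Q]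

lemma isUnit_Q (n : ℕ) : IsUnit (Q n) := by
  rw [isUnit_iff_constantCoeff]
  simp [Q, map_prod]

lemma dvd_Q_sub_Q {i j : ℕ} (h : i ≤ j) : (X : S) ^ (i + 1) ∣ Q j - Q i := by
  induction j, h using Nat.le_induction with
  | base => simp
  | succ j hj ih =>
    have : Q (j + 1) - Q i = (Q j - Q i) - X ^ (j + 1) * Q j := by rw [Q_succ]; ring
    rw [this]
    exact dvd_sub ih ((pow_dvd_pow _ (by omega)).mul_right _)

lemma dvd_E_sub_Q (i : ℕ) : (X : S) ^ (i + 1) ∣ E - Q i := by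
  rw [X_pow_dvd_iff]
  intro d hd
  have h := Filter.tendsto_finset_range.eventually
    (coeff_prod_one_sub_X_pow_eventually_eq (ZMod 5) d)
  obtain ⟨N, hN, hiN⟩ := (h.and (Filter.eventually_ge_atTop i)).exists
  have h2 := (X_pow_dvd_iff.1 (dvd_Q_sub_Q hiN)) d hd
  rw [map_sub] at h2 ⊢
  rw [← hN]
  exact h2

/-- The coefficient of `x^k` in the Laurent polynomial
`∏_{0 ≤ i ≤ n} (1 - x q^i) ∏_{1 ≤ i ≤ n} (1 - q^i / x)`, computed by multiplying in one pair of
factors `(1 - x q^(n+1)) (1 - q^(n+1) / x)` at a time. -/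
noncomputable def a : ℕ → ℤ → S
  | 0, k => if k = 0 then 1 else if k = 1 then -1 else 0
  | n + 1, k => (1 + X ^ (2 * n + 2)) * a n k - X ^ (n + 1) * (a n (k - 1) + a n (k + 1))

lemma a_eq_zero (n : ℕ) (k : ℤ) (h : k < -n ∨ (n : ℤ) + 1 < k) : a n k = 0 := by
  induction n generalizing k with
  | zero =>
    have h0 : k ≠ 0 := by omega
    have h1 : k ≠ 1 := by omega
    simp [a, h0, h1]
  | succ n ih =>
    push_cast at h
    rw [a, ih k (by omega), ih (k - 1) (by omega), ih (k + 1) (by omega)]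
    simp

/-- The finite Jacobi triple product: `a n k = (-1)^k q^(k(k-1)/2) [2n+1 choose n+k]_q`. -/
lemma a_closed (n i j : ℕ) (h : i + j = 2 * n + 1) :
    Q i * Q j * a n (i - n) = sg (i - n) * X ^ T (i - n) * Q (2 * n + 1) := by
  induction n generalizing i j with
  | zero =>
    obtain ⟨rfl, rfl⟩ | ⟨rfl, rfl⟩ : (i = 0 ∧ j = 1) ∨ (i = 1 ∧ j = 0) := by omega
    · simp [a, T]
    · simp [a, T]
  | succ n ih =>
    obtain ⟨k, hk⟩ : ∃ k : ℤ, k = (i : ℤ) - (n + 1 : ℕ) := ⟨_, rfl⟩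
    rw [← hk]
    push_cast at hk
    -- the three neighbouring coefficients of the previous product, uniformly in `i` and `j`
    have h0 : Q i * Q j * a n k =
        (1 - X ^ i) * (1 - X ^ j) * (sg k * X ^ T k * Q (2 * n + 1)) := by
      rcases i with _ | i
      · rw [a_eq_zero n k (by omega)]; simp
      rcases j with _ | j
      · rw [a_eq_zero n k (by omega)]; simp
      have := ih i j (by omega)
      rw [show (i : ℤ) - n = k by push_cast at hk; omega] at this
      rw [Q_succ, Q_succ, ← this]; ring
    have hX1 : (X : S) ^ (n + 1) * X ^ T (k - 1) = X ^ T k * X ^ j := by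
      rw [← pow_add, ← pow_add]
      congr 1
      have e1 := two_mul_T k
      have e2 := two_mul_T (k - 1)
      have : (k - 1) * (k - 1 - 1) = k * (k - 1) - 2 * k + 2 := by ring
      omega
    have hX2 : (X : S) ^ (n + 1) * X ^ T (k + 1) = X ^ T k * X ^ i := by
      rw [← pow_add, ← pow_add]
      congr 1
      have e1 := two_mul_T k
      have e2 := two_mul_T (k + 1)
      have : (k + 1) * (k + 1 - 1) = k * (k - 1) + 2 * k := by ring
      omega
    have h1 : X * (X ^ (n + 1) * (Q i * Q j * a n (k - 1))) =
        - (X ^ j * (1 - X ^ i) * (X - X ^ i) * (sg k * X ^ T k * Q (2 * n + 1))) := by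
      rcases i with _ | _ | i
      · rw [a_eq_zero n (k - 1) (by omega)]; simp
      · rw [a_eq_zero n (k - 1) (by omega)]; simp
      have := ih i j (by omega)
      rw [show (i : ℤ) - n = k - 1 by push_cast at hk; omega, sg_sub, sg_one] at this
      rw [Q_succ, Q_succ, show X * (X ^ (n + 1) * (Q i * (1 - X ^ (i + 1)) *
          (1 - X ^ (i + 1 + 1)) * Q j * a n (k - 1))) = X * (X ^ (n + 1) * ((1 - X ^ (i + 1)) *
          (1 - X ^ (i + 1 + 1)) * (Q i * Q j * a n (k - 1)))) by ring, this]
      linear_combination (-X * (1 - X ^ (i + 1)) * (1 - X ^ (i + 1 + 1)) * sg k *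
        Q (2 * n + 1)) * hX1
    have h2 : X * (X ^ (n + 1) * (Q i * Q j * a n (k + 1))) =
        - (X ^ i * (1 - X ^ j) * (X - X ^ j) * (sg k * X ^ T k * Q (2 * n + 1))) := by
      rcases j with _ | _ | j
      · rw [a_eq_zero n (k + 1) (by omega)]; simp
      · rw [a_eq_zero n (k + 1) (by omega)]; simp
      have := ih i j (by omega)
      rw [show (i : ℤ) - n = k + 1 by omega, sg_add, sg_one] at this
      rw [Q_succ, Q_succ, show X * (X ^ (n + 1) * (Q i * (Q j * (1 - X ^ (j + 1)) *
          (1 - X ^ (j + 1 + 1))) * a n (k + 1))) = X * (X ^ (n + 1) * ((1 - X ^ (j + 1)) *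
          (1 - X ^ (j + 1 + 1)) * (Q i * Q j * a n (k + 1)))) by ring, this]
      linear_combination (-X * (1 - X ^ (j + 1)) * (1 - X ^ (j + 1 + 1)) * sg k *
        Q (2 * n + 1)) * hX2
    have hij : X * X ^ (2 * n + 2) = (X : S) ^ i * X ^ j := by
      rw [← pow_add, ← pow_succ']; congr 1; omega
    have hQ : X * Q (2 * (n + 1) + 1) =
        (X - X ^ i * X ^ j) * (1 - X ^ i * X ^ j) * Q (2 * n + 1) := by
      rw [show 2 * (n + 1) + 1 = 2 * n + 1 + 1 + 1 by ring, Q_succ, Q_succ, ← hij]; ring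
    refine mul_left_cancel₀ (X_ne_zero (R := ZMod 5)) ?_
    rw [a]
    linear_combination (X + X * X ^ (2 * n + 2)) * h0 - h1 - h2 - sg k * X ^ T k * hQ
      + ((1 - X ^ i) * (1 - X ^ j) * (sg k * X ^ T k * Q (2 * n + 1))) * hij

lemma dvd_E_mul_a (n : ℕ) (k : ℤ) : (X : S) ^ (n + 1) ∣ E * a n k - sg k * X ^ T k := by
  have e1 := le_T_add k
  have e2 := neg_le_T k
  by_cases h : k < -n ∨ (n : ℤ) + 1 < k
  · rw [a_eq_zero n k h, mul_zero, zero_sub, dvd_neg]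
    exact (pow_dvd_pow _ (by omega)).mul_left _
  · obtain ⟨i, hi⟩ : ∃ i : ℕ, (i : ℤ) = n + k := ⟨(n + k).toNat, by omega⟩
    obtain ⟨j, hj⟩ : ∃ j : ℕ, (j : ℤ) = n + 1 - k := ⟨(n + 1 - k).toNat, by omega⟩
    have hc := a_closed n i j (by omega)
    rw [show (i : ℤ) - n = k by omega] at hc
    refine (((isUnit_Q i).mul (isUnit_Q j)).dvd_mul_left).1 ?_
    have hm : Q i * Q j * (E * a n k - sg k * X ^ T k) =
        sg k * (X ^ T k * ((E - Q i) * Q (2 * n + 1))) +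
        sg k * (X ^ T k * ((Q (2 * n + 1) - Q j) * Q i)) := by
      linear_combination E * hc
    rw [hm]
    refine dvd_add (Dvd.dvd.mul_left ?_ _) (Dvd.dvd.mul_left ?_ _)
    · refine dvd_trans (pow_dvd_pow X (show n + 1 ≤ T k + (i + 1) by omega)) ?_
      rw [pow_add]
      exact mul_dvd_mul_left _ ((dvd_E_sub_Q i).mul_right _)
    · refine dvd_trans (pow_dvd_pow X (show n + 1 ≤ T k + (j + 1) by omega)) ?_
      rw [pow_add]
      exact mul_dvd_mul_left _ ((dvd_Q_sub_Q (by omega)).mul_right _)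

lemma finite_a (n : ℕ) (w : ℤ → S) : (Function.support fun k => w k * a n k).Finite := by
  refine (Set.finite_Icc (-n : ℤ) (n + 1)).subset fun k hk => ?_
  by_contra h
  apply hk
  simp only [Set.mem_Icc, not_and_or, not_le] at h
  simp [a_eq_zero n k h]

/-- Summation by parts for the recursion defining `a`. -/
lemma finsum_a_succ (n : ℕ) (w : ℤ → S) : ∑ᶠ k, w k * a (n + 1) k =
    (1 + X ^ (2 * n + 2)) * ∑ᶠ k, w k * a n k
      - X ^ (n + 1) * (∑ᶠ k, w (k + 1) * a n k + ∑ᶠ k, w (k - 1) * a n k) := by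
  have s1 : ∑ᶠ k, w (k + 1) * a n k = ∑ᶠ k, w k * a n (k - 1) := by
    rw [← finsum_comp_equiv (Equiv.addRight (1 : ℤ)) (f := fun k => w k * a n (k - 1))]
    simp
  have s2 : ∑ᶠ k, w (k - 1) * a n k = ∑ᶠ k, w k * a n (k + 1) := by
    rw [← finsum_comp_equiv (Equiv.subRight (1 : ℤ)) (f := fun k => w k * a n (k + 1))]
    simp
  have f1 : (Function.support fun k => w k * a n (k - 1)).Finite := by
    refine (Set.finite_Icc (-n : ℤ) (n + 2)).subset fun k hk => ?_
    by_contra h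
    apply hk
    simp only [Set.mem_Icc, not_and_or, not_le] at h
    simp [a_eq_zero n (k - 1) (by omega)]
  have f2 : (Function.support fun k => w k * a n (k + 1)).Finite := by
    refine (Set.finite_Icc (-n - 1 : ℤ) (n + 1)).subset fun k hk => ?_
    by_contra h
    apply hk
    simp only [Set.mem_Icc, not_and_or, not_le] at h
    simp [a_eq_zero n (k + 1) (by omega)]
  have f12 : (Function.support fun k => w k * a n (k - 1) + w k * a n (k + 1)).Finite :=
    (f1.union f2).subset (Function.support_add _ _)
  rw [s1, s2, ← finsum_add_distrib f1 f2, mul_finsum, mul_finsum,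
    ← finsum_sub_distrib]
  · refine finsum_congr fun k => ?_
    rw [a]; ring
  · exact (finite_a n w).subset fun k hk h => hk (by simp only [h, mul_zero])
  · exact f12.subset fun k hk h => hk (by simp only [h, mul_zero])

lemma finsum_a (n : ℕ) : ∑ᶠ k, (1 : S) * a n k = 0 ∧ ∑ᶠ k : ℤ, (k : S) * a n k = - Q n ^ 2 := by
  induction n with
  | zero =>
    have key (w : ℤ → S) : ∑ᶠ k, w k * a 0 k = w 0 - w 1 := by
      rw [finsum_eq_sum_of_support_subset (s := {0, 1})]
      · simp [a, sub_eq_add_neg]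
      · intro k hk
        by_contra h
        apply hk
        simp only [Finset.coe_insert, Finset.coe_singleton, Set.mem_insert_iff,
          Set.mem_singleton_iff, not_or] at h
        simp [a, h.1, h.2]
    rw [key (fun _ => 1), key (fun k => (k : S))]
    simp
  | succ n ih =>
    obtain ⟨h0, h1⟩ := ih
    refine ⟨by rw [finsum_a_succ n (fun _ => 1), h0]; simp, ?_⟩
    rw [finsum_a_succ n (fun k => (k : S)), h1]
    have p1 : ∑ᶠ k : ℤ, ((k + 1 : ℤ) : S) * a n k = - Q n ^ 2 := by
      rw [← h1, ← add_zero (∑ᶠ k : ℤ, (k : S) * a n k), ← h0,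
        ← finsum_add_distrib (finite_a n _) (finite_a n _)]
      exact finsum_congr fun k => by push_cast; ring
    have p2 : ∑ᶠ k : ℤ, ((k - 1 : ℤ) : S) * a n k = - Q n ^ 2 := by
      rw [← h1, ← sub_zero (∑ᶠ k : ℤ, (k : S) * a n k), ← h0,
        ← finsum_sub_distrib (finite_a n _) (finite_a n _)]
      exact finsum_congr fun k => by push_cast; ring
    rw [p1, p2, Q_succ]
    ring

section Theta

open scoped PowerSeries.WithPiTopology

lemma summable_mul_X_pow {ι : Type*} (c : ι → S) (e : ι → ℕ) (h : ∀ d, {i | e i ≤ d}.Finite) :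
    Summable fun i => c i * X ^ e i := by
  rw [WithPiTopology.summable_iff_summable_coeff]
  intro d
  refine summable_of_hasFiniteSupport ((h d).subset fun i hi => ?_)
  by_contra hlt
  apply hi
  simp only [Set.mem_ofPred_eq, not_le] at hlt
  simp [coeff_mul_X_pow', hlt]

lemma finite_T_le (d : ℕ) : {k : ℤ | T k ≤ d}.Finite := by
  refine (Set.finite_Icc (-d : ℤ) (d + 1)).subset fun k hk => ?_
  have e1 := le_T_add k
  have e2 := neg_le_T k
  simp only [Set.mem_ofPred_eq] at hk
  simp only [Set.mem_Icc]
  omega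

/-- The general term of the moment series `θ i`. -/
noncomputable def g (i : ℕ) (k : ℤ) : S := sg k * (k : S) ^ i * X ^ T k

/-- The moments `∑_{k ∈ ℤ} (-1)^k k^i q^(k(k-1)/2)` of Jacobi's theta series at `x = 1`. -/
noncomputable def θ (i : ℕ) : S := ∑' k, g i k

lemma summable_g (i : ℕ) : Summable (g i) := summable_mul_X_pow _ _ finite_T_le

lemma hasSum_of_eq {ι : Type*} {f f' : ι → S} {s s' : S} (h : HasSum f s) (hf : ∀ i, f' i = f i)
    (hs : s' = s) : HasSum f' s' := by
  rw [hs, funext hf]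
  exact h

/-- A convergent sum of power series over `𝔽₅` vanishes if a permutation of the index set reverses
the sign of every term. -/
lemma hasSum_zero_of_antisymm {ι : Type*} {f : ι → S} {s : S} (h : HasSum f s) (e : ι ≃ ι)
    (he : ∀ i, f (e i) = - f i) : s = 0 := by
  have h1 : HasSum (f ∘ e) s := e.hasSum_iff.2 h
  have h2 : HasSum (f ∘ e) (-s) := hasSum_of_eq h.neg he rfl
  have h3 : s = -s := h1.unique h2
  have h4 : (2 : S) * s = 0 := by linear_combination h3
  have h5 : (2 : S) ≠ 0 := by
    intro h
    have := congrArg (constantCoeff (R := ZMod 5)) h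
    simp only [map_ofNat, map_zero] at this
    exact absurd this (by decide)
  exact (mul_eq_zero.1 h4).resolve_left h5

lemma θ_zero : θ 0 = 0 := by
  refine hasSum_zero_of_antisymm (summable_g 0).hasSum (Equiv.subLeft 1) fun k => ?_
  simp [g, T_one_sub, sg_sub]

/-- Jacobi's identity. -/
lemma θ_one : θ 1 = - E ^ 3 := by
  suffices h : ∀ n : ℕ, (X : S) ^ (n + 1) ∣ θ 1 + E ^ 3 by
    rw [eq_neg_iff_add_eq_zero]
    ext d
    exact X_pow_dvd_iff.1 (h d) d (Nat.lt_succ_self d)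
  intro n
  have hfin : ∑ k ∈ Finset.Icc (-n : ℤ) (n + 1), (k : S) * a n k = - Q n ^ 2 := by
    rw [← (finsum_a n).2]
    refine (finsum_eq_sum_of_support_subset _ fun k hk => ?_).symm
    by_contra h
    apply hk
    simp only [Finset.coe_Icc, Set.mem_Icc, not_and_or, not_le] at h
    simp [a_eq_zero n k h]
  have h1 : (X : S) ^ (n + 1) ∣ θ 1 - ∑ k ∈ Finset.Icc (-n : ℤ) (n + 1), g 1 k := by
    rw [X_pow_dvd_iff]
    intro d hd
    have hs := (WithPiTopology.hasSum_iff_hasSum_coeff _).1 (summable_g 1).hasSum d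
    have ht : HasSum (fun k => coeff d (g 1 k))
        (∑ k ∈ Finset.Icc (-n : ℤ) (n + 1), coeff d (g 1 k)) := by
      refine hasSum_sum_of_ne_finset_zero fun k hk => ?_
      have e1 := le_T_add k
      have e2 := neg_le_T k
      simp only [Finset.mem_Icc] at hk
      rw [g, coeff_mul_X_pow', if_neg (by omega)]
    rw [map_sub, map_sum, sub_eq_zero]
    exact hs.unique ht
  have h2 : (X : S) ^ (n + 1) ∣ ∑ k ∈ Finset.Icc (-n : ℤ) (n + 1),
      (k : S) * (E * a n k - sg k * X ^ T k) :=
    Finset.dvd_sum fun k _ => (dvd_E_mul_a n k).mul_left _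
  have h3 : ∑ k ∈ Finset.Icc (-n : ℤ) (n + 1), (k : S) * (E * a n k - sg k * X ^ T k) =
      - (E * Q n ^ 2) - ∑ k ∈ Finset.Icc (-n : ℤ) (n + 1), g 1 k := by
    rw [show -(E * Q n ^ 2) = E * (- Q n ^ 2) by ring, ← hfin, Finset.mul_sum,
      ← Finset.sum_sub_distrib]
    refine Finset.sum_congr rfl fun k _ => ?_
    rw [g]; ring
  rw [h3] at h2
  have h4 := (dvd_E_sub_Q n).mul_left (E * (E + Q n))
  convert (h1.sub h2).add h4 using 1
  ring

/-! ### The eighth power as a binary theta series -/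

/-- The exponent of `q` attached to the lattice point `(u, v)`. It satisfies
`3 N + 1 = u² - uv + v²` as soon as `3 ∤ u + v`. -/
def N (u v : ℤ) : ℕ :=
  T (u - (u + v) / 3) + T (v - (u + v) / 3) + T (-((u + v) / 3))

lemma three_mul_N (u v : ℤ) (h : ¬ 3 ∣ u + v) : 3 * (N u v : ℤ) + 1 = u ^ 2 - u * v + v ^ 2 := by
  obtain ⟨k, hk⟩ : ∃ k, k = (u + v) / 3 := ⟨_, rfl⟩
  have e1 := two_mul_T (u - k)
  have e2 := two_mul_T (v - k)
  have e3 := two_mul_T (-k)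
  simp only [N, ← hk]
  push_cast
  rcases (show v = 3 * k + 1 - u ∨ v = 3 * k + 2 - u by omega) with rfl | rfl <;>
    nlinarith

/-- The sum along the diagonal direction collapses, by the pentagonal number theorem, to a
monomial times the Euler product (or to zero, when `3 ∣ u + v`). -/
lemma hasSum_diag (u v : ℤ) : ∃ c : ℤ, (3 ∣ u + v → c = 0) ∧
    HasSum (fun k : ℤ => sg (k + u) * sg (k + v) * sg k * X ^ (T (k + u) + T (k + v) + T k))
      ((c : S) * X ^ N u v * E) := by
  obtain ⟨k, hk⟩ : ∃ k, k = (u + v) / 3 := ⟨_, rfl⟩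
  have e1 := two_mul_T (u - k)
  have e2 := two_mul_T (v - k)
  have e3 := two_mul_T (-k)
  have hN : N u v = T (u - k) + T (v - k) + T (-k) := by simp only [N, ← hk]
  have hpent := WithPiTopology.hasSum_pentagonalSeries (ZMod 5)
  rcases (show v = 3 * k - u ∨ v = 3 * k + 1 - u ∨ v = 3 * k + 2 - u by omega) with
    rfl | rfl | rfl
  · refine ⟨0, fun _ => rfl, ?_⟩
    have hs : Summable (fun c : ℤ => sg (c + u) * sg (c + (3 * k - u)) * sg c *
        X ^ (T (c + u) + T (c + (3 * k - u)) + T c)) :=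
      summable_mul_X_pow _ _ fun d => (finite_T_le d).subset fun c hc => by
        simp only [Set.mem_ofPred_eq] at hc ⊢; omega
    have := hasSum_zero_of_antisymm hs.hasSum (Equiv.subLeft (1 - 2 * k)) fun c => ?_
    · simpa [this] using hs.hasSum
    · have hT : T (1 - 2 * k - c + u) + T (1 - 2 * k - c + (3 * k - u)) + T (1 - 2 * k - c) =
          T (c + u) + T (c + (3 * k - u)) + T c := by
        have f1 := two_mul_T (1 - 2 * k - c + u)
        have f2 := two_mul_T (1 - 2 * k - c + (3 * k - u))
        have f3 := two_mul_T (1 - 2 * k - c)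
        have f4 := two_mul_T (c + u)
        have f5 := two_mul_T (c + (3 * k - u))
        have f6 := two_mul_T c
        zify
        nlinarith
      have hs : sg (1 - 2 * k - c + u) * sg (1 - 2 * k - c + (3 * k - u)) * sg (1 - 2 * k - c) =
          - (sg (c + u) * sg (c + (3 * k - u)) * sg c) := by
        simp only [← sg_add]
        rw [show -sg (c + u + (c + (3 * k - u)) + c) = sg 1 * sg (c + u + (c + (3 * k - u)) + c) by
          simp, ← sg_add, sg, sg]
        congr 2
        rw [Int.negOnePow_eq_iff]
        exact ⟨1 - 3 * c - 3 * k, by ring⟩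
      simp only [Equiv.subLeft_apply]
      rw [hs, hT]
      ring
  · refine ⟨(u - k + (3 * k + 1 - u - k) + -k).negOnePow, fun h => by omega, ?_⟩
    change HasSum _ (sg (u - k + (3 * k + 1 - u - k) + -k) * _ * E)
    rw [sg_add, sg_add]
    have h1 := (hpent.mul_left (sg (u - k) * sg (3 * k + 1 - u - k) * sg (-k) *
      X ^ N u (3 * k + 1 - u)))
    rw [← (Equiv.addRight k).hasSum_iff] at h1
    refine hasSum_of_eq h1 (fun c => ?_) rfl
    have hT : T (c + u) + T (c + (3 * k + 1 - u)) + T c =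
        N u (3 * k + 1 - u) + pentagonal (c + k) := by
      have f0 := two_mul_natCast_pentagonal (c + k)
      have f4 := two_mul_T (c + u)
      have f5 := two_mul_T (c + (3 * k + 1 - u))
      have f6 := two_mul_T c
      rw [hN]
      zify
      nlinarith
    simp only [Function.comp_apply, Equiv.coe_addRight]
    change _ = _ * (sg (c + k) * _)
    have hs : sg (c + u) * sg (c + (3 * k + 1 - u)) * sg c =
        sg (u - k) * sg (3 * k + 1 - u - k) * sg (-k) * sg (c + k) := by
      simp only [← sg_add]
      rw [sg, sg]
      congr 2
      rw [Int.negOnePow_eq_iff]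
      exact ⟨c + k, by ring⟩
    rw [hs, hT, pow_add]
    ring
  · refine ⟨(u - k + (3 * k + 2 - u - k) + -k).negOnePow, fun h => by omega, ?_⟩
    change HasSum _ (sg (u - k + (3 * k + 2 - u - k) + -k) * _ * E)
    rw [sg_add, sg_add]
    have h1 := (hpent.mul_left (sg (u - k) * sg (3 * k + 2 - u - k) * sg (-k) *
      X ^ N u (3 * k + 2 - u)))
    rw [← ((Equiv.addRight k).trans (Equiv.neg ℤ)).hasSum_iff] at h1
    refine hasSum_of_eq h1 (fun c => ?_) rfl
    have hT : T (c + u) + T (c + (3 * k + 2 - u)) + T c =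
        N u (3 * k + 2 - u) + pentagonal (-(c + k)) := by
      have f0 := two_mul_natCast_pentagonal_neg (c + k)
      have f4 := two_mul_T (c + u)
      have f5 := two_mul_T (c + (3 * k + 2 - u))
      have f6 := two_mul_T c
      rw [hN]
      zify
      nlinarith
    simp only [Function.comp_apply, Equiv.trans_apply, Equiv.coe_addRight, Equiv.neg_apply]
    change _ = _ * (sg (-(c + k)) * _)
    have hs : sg (c + u) * sg (c + (3 * k + 2 - u)) * sg c =
        sg (u - k) * sg (3 * k + 2 - u - k) * sg (-k) * sg (c + k) := by
      simp only [← sg_add]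
      rw [sg, sg]
      congr 2
      rw [Int.negOnePow_eq_iff]
      exact ⟨c + k, by ring⟩
    rw [hs, hT, pow_add, sg_neg (c + k)]
    ring

lemma hasSum_g_mul (i j l : ℕ) :
    HasSum (fun x : (ℤ × ℤ) × ℤ => g i x.1.1 * g j x.1.2 * g l x.2) (θ i * θ j * θ l) := by
  have h2 : Summable fun x : ℤ × ℤ => g i x.1 * g j x.2 := by
    have := summable_mul_X_pow (fun x : ℤ × ℤ => (sg x.1 * (x.1 : S) ^ i) * (sg x.2 * (x.2 : S) ^ j))
      (fun x => T x.1 + T x.2) fun d => ((finite_T_le d).prod (finite_T_le d)).subset fun x hx => by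
        simp only [Set.mem_ofPred_eq, Set.mem_prod] at hx ⊢; omega
    refine this.congr fun x => ?_
    simp only [g]; ring
  have h3 : Summable fun x : (ℤ × ℤ) × ℤ => g i x.1.1 * g j x.1.2 * g l x.2 := by
    have := summable_mul_X_pow (fun x : (ℤ × ℤ) × ℤ => (sg x.1.1 * (x.1.1 : S) ^ i) *
        (sg x.1.2 * (x.1.2 : S) ^ j) * (sg x.2 * (x.2 : S) ^ l))
      (fun x => T x.1.1 + T x.1.2 + T x.2) fun d =>
        (((finite_T_le d).prod (finite_T_le d)).prod (finite_T_le d)).subset fun x hx => by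
        simp only [Set.mem_ofPred_eq, Set.mem_prod] at hx ⊢; omega
    refine this.congr fun x => ?_
    simp only [g]; ring
  exact ((summable_g i).hasSum.mul (summable_g j).hasSum h2).mul (summable_g l).hasSum h3

/-- `(a - c)² (b - c)` is expanded into monomials; all but `abc` involve the vanishing `θ 0`. -/
lemma hasSum_cubic : HasSum (fun x : (ℤ × ℤ) × ℤ =>
      ((x.1.1 - x.2 : ℤ) : S) ^ 2 * ((x.1.2 - x.2 : ℤ) : S) * (g 0 x.1.1 * g 0 x.1.2 * g 0 x.2))
    (2 * E ^ 9) := by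
  have h := ((((hasSum_g_mul 2 1 0).sub (hasSum_g_mul 2 0 1)).sub
    ((hasSum_g_mul 1 1 1).mul_left 2)).add (((hasSum_g_mul 1 0 2).mul_left 2).add
    (hasSum_g_mul 0 1 2))).sub (hasSum_g_mul 0 0 3)
  refine hasSum_of_eq h (fun x => ?_) ?_
  · simp only [g]
    push_cast
    ring
  · rw [θ_zero, θ_one]
    ring

/-- If `3 m + 1` is not of the form `u² - uv + v²`, then `q^m` does not occur in the eighth power of
the Euler product. -/
theorem coeff_E_pow_eight (m : ℕ) (hm : ∀ u v : ℤ, u ^ 2 - u * v + v ^ 2 ≠ 3 * m + 1) :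
    coeff m (E ^ 8) = 0 := by
  choose c hc0 hc using hasSum_diag
  -- the shear `(u, v, k) ↦ (k + u, k + v, k)`
  let e : (ℤ × ℤ) × ℤ ≃ (ℤ × ℤ) × ℤ :=
    { toFun := fun x => ((x.2 + x.1.1, x.2 + x.1.2), x.2)
      invFun := fun x => ((x.1.1 - x.2, x.1.2 - x.2), x.2)
      left_inv := fun x => by simp
      right_inv := fun x => by simp }
  have h1 := e.hasSum_iff.2 hasSum_cubic
  have h2 : HasSum (fun x : ℤ × ℤ => (x.1 : S) ^ 2 * (x.2 : S) * ((c x.1 x.2 : S) * X ^ N x.1 x.2 * E))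
      (2 * E ^ 9) := by
    refine h1.prod_fiberwise fun x => ?_
    refine hasSum_of_eq ((hc x.1 x.2).mul_left ((x.1 : S) ^ 2 * (x.2 : S))) (fun k => ?_) rfl
    simp only [e, Function.comp_apply, Equiv.coe_fn_mk, g]
    push_cast
    ring
  have hE : IsUnit E := by
    rw [isUnit_iff_constantCoeff, ← coeff_zero_eq_constantCoeff_apply]
    have := coeff_pentagonalSeries_pentagonal (ZMod 5) 0
    have h0 : pentagonal 0 = 0 := by simp [pentagonal_def]
    rw [h0] at this
    rw [this]
    simp
  obtain ⟨E', hE'⟩ := hE.exists_right_inv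
  have h3 := h2.mul_right E'
  have h4 := (WithPiTopology.hasSum_iff_hasSum_coeff _).1 h3 m
  have h5 : ∀ x : ℤ × ℤ,
      coeff m ((x.1 : S) ^ 2 * (x.2 : S) * ((c x.1 x.2 : S) * X ^ N x.1 x.2 * E) * E') = 0 := by
    intro x
    by_cases h : 3 ∣ x.1 + x.2
    · simp [hc0 _ _ h]
    · have hN := three_mul_N x.1 x.2 h
      have hne : m ≠ N x.1 x.2 := fun h' => hm x.1 x.2 (by rw [h']; exact hN.symm)
      rw [show (x.1 : S) ^ 2 * (x.2 : S) * ((c x.1 x.2 : S) * X ^ N x.1 x.2 * E) * E' =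
        ((x.1 ^ 2 * x.2 * c x.1 x.2 : ℤ) : S) * X ^ N x.1 x.2 * (E * E') by push_cast; ring,
        hE', mul_one, ← map_intCast (C (R := ZMod 5)), coeff_C_mul_X_pow, if_neg hne]
  have h6 : coeff m (2 * E ^ 9 * E') = 0 := by
    refine h4.unique ?_
    simp only [h5]
    exact hasSum_zero
  rw [show 2 * E ^ 9 * E' = ((2 : ℤ) : S) * E ^ 8 * (E * E') by push_cast; ring, hE', mul_one,
    ← map_intCast (C (R := ZMod 5)), coeff_C_mul] at h6
  exact (mul_eq_zero.1 h6).resolve_left (by decide)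

end Theta
/-! ### The generating function of regular multipartitions -/

section GenFun

open Nat.Partition Finset

/-- The generating function of the number of 5-regular partitions, with coefficients in `R`. -/
noncomputable def F (R : Type*) [CommRing R] : PowerSeries R :=
  PowerSeries.mk fun n => (#(restricted n (¬ 5 ∣ ·)) : R)

open Classical in
lemma B_eq_coeff (R : Type*) [CommRing R] (r n : ℕ) : (B 5 r n : R) = coeff n (F R ^ r) := by
  -- the terms of `F` up to degree `n`, listed by partition
  let w : (Σ a : Fin (n + 1), Nat.Partition a) → PowerSeries R := fun s =>
    if ∀ part ∈ s.2.parts, ¬ 5 ∣ part then X ^ (s.1 : ℕ) else 0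
  have hw : ∑ s, w s = (trunc (n + 1) (F R) : PowerSeries R) := by
    rw [Fintype.sum_sigma]
    ext d
    rw [map_sum, Polynomial.coeff_coe, coeff_trunc]
    have hin : ∀ a : Fin (n + 1), coeff d (∑ y : Nat.Partition a, w ⟨a, y⟩) =
        if d = a then (#(restricted (a : ℕ) (¬ 5 ∣ ·)) : R) else 0 := by
      intro a
      rw [map_sum]
      by_cases h : d = a
      · simp [w, apply_ite, coeff_X_pow, h, restricted, Finset.sum_boole]
      · simp [w, apply_ite, coeff_X_pow, h]
    simp_rw [hin]
    rw [Fin.sum_univ_eq_sum_range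
      (fun a => if d = a then (#(restricted a (¬ 5 ∣ ·)) : R) else 0) (n + 1)]
    simp [F]
  have h1 : coeff n (F R ^ r) = coeff n ((∑ s, w s) ^ r) := by
    rw [hw]
    have h2 : (X : PowerSeries R) ^ (n + 1) ∣ F R - (trunc (n + 1) (F R) : PowerSeries R) := by
      rw [X_pow_dvd_iff]
      intro d hd
      rw [map_sub, Polynomial.coeff_coe, coeff_trunc, if_pos hd, sub_self]
    have h3 := X_pow_dvd_iff.1 (h2.trans (sub_dvd_pow_sub_pow _ _ r)) n (Nat.lt_succ_self n)
    rwa [map_sub, sub_eq_zero] at h3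
  have h4 : (∑ s, w s) ^ r = ∑ f : Fin r → (Σ a : Fin (n + 1), Nat.Partition a), ∏ i, w (f i) := by
    have := Finset.prod_univ_sum (fun _ : Fin r => (univ : Finset (Σ a : Fin (n + 1),
      Nat.Partition a))) (fun _ s => w s)
    simpa using this
  rw [h1, h4, map_sum]
  have h5 : ∀ f : Fin r → (Σ a : Fin (n + 1), Nat.Partition a), coeff n (∏ i, w (f i)) =
      if (∑ i, ((f i).1 : ℕ)) = n ∧ ∀ i, ∀ part ∈ (f i).2.parts, ¬ 5 ∣ part then 1 else 0 := by
    intro f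
    by_cases h : ∀ i, ∀ part ∈ (f i).2.parts, ¬ 5 ∣ part
    · have : ∏ i, w (f i) = X ^ (∑ i, ((f i).1 : ℕ)) := by
        rw [← Finset.prod_pow_eq_pow_sum]
        exact Finset.prod_congr rfl fun i _ => if_pos (h i)
      rw [this, coeff_X_pow]
      exact if_congr ⟨fun hn => ⟨hn.symm, h⟩, fun hn => hn.1.symm⟩ rfl rfl
    · obtain ⟨i, hi⟩ := not_forall.1 h
      rw [Finset.prod_eq_zero (mem_univ i) (if_neg hi), map_zero, if_neg fun h' => h h'.2]
  simp_rw [h5]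
  rw [Finset.sum_boole, B, Fintype.card_subtype]

/-- In characteristic `p` over the prime field, a `p`-th power is a series in `q^p`. -/
lemma pow_eq_expand (p : ℕ) [hp : Fact p.Prime] (f : PowerSeries (ZMod p)) :
    f ^ p = expand p hp.out.ne_zero f := by
  have h := MvPowerSeries.map_frobenius_expand (R := ZMod p) (σ := Unit) p hp.out.ne_zero (f := f)
  rw [ZMod.frobenius_zmod] at h
  exact h.symm.trans (by simp [expand])

/-- Modulo 5, Glaisher's theorem turns the generating function of 5-regular partitions into
`∏ (1 + x + x² + x³ + x⁴)` with `x = q^m`, and each factor is `(1 - x)⁴`. -/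
lemma F_five : F (ZMod 5) = E ^ 4 := by
  open scoped PowerSeries.WithPiTopology in
  have h1 := hasProd_powerSeriesMk_card_countRestricted (ZMod 5) (m := 5) (by norm_num)
  have hF : F (ZMod 5) = PowerSeries.mk fun n => (#(countRestricted n 5) : ZMod 5) := by
    simp [F, card_restricted_eq_card_countRestricted]
  have h2 : HasProd (fun i : ℕ => ((1 - X ^ (i + 1)) ^ 4 : S)) (E ^ 4) :=
    (WithPiTopology.hasProd_one_sub_X_pow (ZMod 5)).pow 4
  rw [hF]
  refine h1.unique ?_
  have h5 : (5 : S) = 0 := by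
    have : ((5 : ZMod 5)) = 0 := by decide
    have := congrArg (C (R := ZMod 5)) this
    rwa [map_ofNat, map_zero] at this
  have h6 : (fun i : ℕ => ∑ j ∈ Finset.range 5, (X ^ ((i + 1) * j) : S)) =
      fun i => (1 - X ^ (i + 1)) ^ 4 := by
    funext i
    simp only [Finset.sum_range_succ, Finset.sum_range_zero, pow_mul]
    linear_combination (X ^ (i + 1) - (X ^ (i + 1)) ^ 2 + (X ^ (i + 1)) ^ 3) * h5
  rw [h6]
  exact h2

/-- `∑ B_5^{(10)}(n) q^n ≡ ∏ (1 - q^(5m))^8` modulo 5. -/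
lemma B_five (m : ℕ) : (B 5 10 (5 * m) : ZMod 5) = coeff m (E ^ 8) := by
  rw [B_eq_coeff, F_five, show (E ^ 4) ^ 10 = (E ^ 8) ^ 5 by ring, pow_eq_expand,
    coeff_expand_mul]

lemma B_two (n : ℕ) (hn : ¬ 2 ∣ n) : (B 5 10 n : ZMod 2) = 0 := by
  rw [B_eq_coeff, show F (ZMod 2) ^ 10 = (F (ZMod 2) ^ 5) ^ 2 by ring, pow_eq_expand,
    coeff_expand_of_not_dvd _ _ _ hn]

end GenFun

/-! ### Primes inert in the Eisenstein integers -/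

lemma dvd_of_dvd_norm {p : ℕ} (hp : p.Prime) (hpm : p % 3 = 2) {u v : ℤ}
    (h : (p : ℤ) ∣ u ^ 2 - u * v + v ^ 2) : (p : ℤ) ∣ u ∧ (p : ℤ) ∣ v := by
  have := Fact.mk hp
  have key : ∀ x y : ZMod p, x ^ 2 - x * y + y ^ 2 = 0 → x = 0 := by
    intro x y hxy
    have h3 : x ^ 3 = (-y) ^ 3 := by linear_combination (x + y) * hxy
    -- cubing is injective modulo `p = 3 s + 2`: the inverse map is `z ↦ z ^ (2 s + 1)`
    have hcube : ∀ z : ZMod p, (z ^ 3) ^ (2 * (p / 3) + 1) = z := by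
      intro z
      rw [← pow_mul, show 3 * (2 * (p / 3) + 1) = p + (p - 1) by omega, pow_add, ZMod.pow_card,
        ← pow_succ', show p - 1 + 1 = p by omega, ZMod.pow_card]
    have hinj : x = -y := by rw [← hcube x, h3, hcube]
    have : 3 * y ^ 2 = 0 := by rw [hinj] at hxy; linear_combination hxy
    have h30 : (3 : ZMod p) ≠ 0 := by
      intro h0
      have := (ZMod.natCast_eq_zero_iff 3 p).1 (by exact_mod_cast h0)
      have := (Nat.prime_dvd_prime_iff_eq hp Nat.prime_three).1 this
      omega
    have hy : y = 0 := by simpa [h30] using this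
    rw [hinj, hy, neg_zero]
  have h0 : (u : ZMod p) ^ 2 - u * v + (v : ZMod p) ^ 2 = 0 := by
    have := (ZMod.intCast_zmod_eq_zero_iff_dvd _ p).2 h
    push_cast at this
    exact this
  exact ⟨(ZMod.intCast_zmod_eq_zero_iff_dvd _ p).1 (key _ _ h0),
    (ZMod.intCast_zmod_eq_zero_iff_dvd _ p).1 (key v u (by linear_combination h0))⟩

/-- An odd power of an inert prime cannot exactly divide a norm. -/
lemma norm_ne {p : ℕ} (hp : p.Prime) (hpm : p % 3 = 2) (t : ℕ) {w : ℤ}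
    (hw : ¬ (p : ℤ) ∣ w) (u v : ℤ) : u ^ 2 - u * v + v ^ 2 ≠ (p : ℤ) ^ (2 * t + 1) * w := by
  have hp0 : (p : ℤ) ≠ 0 := by exact_mod_cast hp.ne_zero
  induction t generalizing u v with
  | zero =>
    intro h
    obtain ⟨⟨x, rfl⟩, ⟨y, rfl⟩⟩ := dvd_of_dvd_norm hp hpm (Dvd.intro w (by rw [h]; ring))
    refine hw ⟨x ^ 2 - x * y + y ^ 2, mul_left_cancel₀ hp0 ?_⟩
    linear_combination -h
  | succ t ih =>
    intro h
    obtain ⟨⟨x, rfl⟩, ⟨y, rfl⟩⟩ := dvd_of_dvd_norm hp hpm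
      (Dvd.intro ((p : ℤ) ^ (2 * t + 2) * w) (by rw [h]; ring))
    refine ih x y (mul_left_cancel₀ (pow_ne_zero 2 hp0) ?_)
    linear_combination h

end EtaEight

theorem stmt_8 (p : ℕ) (hp : Nat.Prime p) (hp5 : p ≠ 5) (hpm : p % 3 = 2)
    (j : ℕ) (hj : 0 < j) (hje : Even j) (hjd : ¬ p ∣ j) (n t : ℕ) :
    B 5 10 (10 * p ^ (2 * t + 2) * n +
      5 * ((p ^ (2 * t + 1) * (4 * p + 3 * j) - 1) / 3)) ≡ 0 [MOD 10] := by
  have hp2 : p ≠ 2 := by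
    rintro rfl
    exact hjd hje.two_dvd
  have hpodd : p % 2 = 1 := hp.eq_two_or_odd.resolve_left hp2
  -- the quotient by `3` is exact
  obtain ⟨M, hM⟩ : ∃ M, p ^ (2 * t + 1) * (4 * p + 3 * j) = 3 * M + 1 := by
    have h1 : p ^ (2 * t + 1) * (4 * p + 3 * j) % 3 = 1 := by
      have hmod : p ≡ 2 [MOD 3] := hpm
      have h2 : p ^ 2 ≡ 1 [MOD 3] := hmod.pow 2
      have h3 : p ^ (2 * t + 1) * (4 * p + 3 * j) =
        (p ^ 2) ^ t * (4 * p ^ 2) + 3 * (p ^ (2 * t + 1) * j) := by ring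
      have h4 : (p ^ 2) ^ t * (4 * p ^ 2) ≡ 1 ^ t * (4 * 1) [MOD 3] :=
        (h2.pow t).mul (h2.mul_left 4)
      rw [one_pow] at h4
      rw [h3, Nat.add_mul_mod_self_left]
      exact h4
    exact ⟨_, by rw [← Nat.div_add_mod (p ^ (2 * t + 1) * (4 * p + 3 * j)) 3, h1]⟩
  have hMq : (p ^ (2 * t + 1) * (4 * p + 3 * j) - 1) / 3 = M := by omega
  have hMo : M % 2 = 1 := by
    have : Even (3 * M + 1) := by
      rw [← hM]
      refine Even.mul_left ?_ _
      exact (Even.mul_right (by decide) p).add (hje.mul_left 3)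
    have := Nat.even_iff.1 this
    omega
  rw [hMq, show 10 * p ^ (2 * t + 2) * n + 5 * M = 5 * (2 * (p ^ (2 * t + 2) * n) + M) by ring]
  obtain ⟨m, hm⟩ : ∃ m, m = 2 * (p ^ (2 * t + 2) * n) + M := ⟨_, rfl⟩
  rw [← hm]
  have h2 : 2 ∣ B 5 10 (5 * m) :=
    (ZMod.natCast_eq_zero_iff _ 2).1 (EtaEight.B_two _ (by omega))
  have h5 : 5 ∣ B 5 10 (5 * m) := by
    refine (ZMod.natCast_eq_zero_iff _ 5).1 ?_
    rw [EtaEight.B_five]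
    refine EtaEight.coeff_E_pow_eight m fun u v => ?_
    have hw : ¬ (p : ℤ) ∣ ((6 * p * n + 4 * p + 3 * j : ℕ) : ℤ) := by
      rw [Int.natCast_dvd_natCast, show 6 * p * n + 4 * p + 3 * j = p * (6 * n + 4) + 3 * j by ring,
        Nat.dvd_add_right (Dvd.intro _ rfl), hp.dvd_mul, not_or]
      refine ⟨fun h => ?_, hjd⟩
      have := (Nat.prime_dvd_prime_iff_eq hp Nat.prime_three).1 h
      omega
    have := EtaEight.norm_ne hp hpm t hw u v
    have he : (3 * m + 1 : ℤ) = (p : ℤ) ^ (2 * t + 1) * ((6 * p * n + 4 * p + 3 * j : ℕ) : ℤ) := by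
      have : 3 * m + 1 = p ^ (2 * t + 1) * (6 * p * n + 4 * p + 3 * j) := by
        rw [hm, show 3 * (2 * (p ^ (2 * t + 2) * n) + M) + 1 =
          6 * (p ^ (2 * t + 2) * n) + (3 * M + 1) by ring, ← hM]
        ring
      exact_mod_cast this
    rwa [he]
  exact (Nat.modEq_zero_iff_dvd).2 (Nat.Coprime.mul_dvd_of_dvd_of_dvd (by norm_num) h2 h5)
end

section
/- Let α ∈ {1, 2, 3, 4}, let p be a prime number different from 3 with p ≡ 3 (mod 4), and let j be a positive integer divisible by 5 but not divisible by p. Then for all integers n ≥ 0 and t ≥ 0, B_3^{(15)}(15·p^{2t+2}·n + (p^{2t+1}·((12α + 5)p + 12j) − 5)/4) ≡ 0 (mod 15). -/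
open PowerSeries

/-- The generating function of `ℓ`-regular partitions, with coefficients in `R`. -/
noncomputable def regularSeries (ℓ : ℕ) (R : Type*) [CommSemiring R] : PowerSeries R :=
  PowerSeries.mk fun n ↦ ((Nat.Partition.restricted n (¬ ℓ ∣ ·)).card : R)

theorem B_eq_sum (ℓ r n : ℕ) : B ℓ r n = ∑ l ∈ Finset.piAntidiag (Finset.univ : Finset (Fin r)) n,
    ∏ i, (Nat.Partition.restricted (l i) (¬ ℓ ∣ ·)).card := by
  classical
  unfold B
  rw [Fintype.card_subtype, Finset.card_eq_sum_card_fiberwise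
    (f := fun f i ↦ ((f i).1 : ℕ)) (t := Finset.piAntidiag (Finset.univ : Finset (Fin r)) n)]
  · refine Finset.sum_congr rfl fun l hl ↦ ?_
    rw [Finset.mem_piAntidiag] at hl
    have hle : ∀ i, l i < n + 1 := fun i ↦ by
      have := Finset.single_le_sum (f := l) (fun _ _ ↦ Nat.zero_le _) (Finset.mem_univ i)
      have hsum : ∑ i, l i = n := hl.1
      omega
    rw [← Fintype.card_piFinset]
    symm
    refine Finset.card_bij (fun g _ i ↦ ⟨⟨l i, hle i⟩, g i⟩) ?_ ?_ ?_
    · intro g hg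
      simp only [Fintype.mem_piFinset, Nat.Partition.restricted, Finset.mem_filter,
        Finset.mem_univ, true_and] at hg ⊢
      exact ⟨⟨hl.1, hg⟩, trivial⟩
    · intro g _ g' _ h
      funext i
      have := congrFun h i
      simpa using this
    · intro f hf
      simp only [Finset.mem_filter, Finset.mem_univ, true_and] at hf
      obtain ⟨⟨_, h2⟩, rfl⟩ := hf
      refine ⟨fun i ↦ (f i).2, ?_, rfl⟩
      simpa [Fintype.mem_piFinset, Nat.Partition.restricted] using h2
  · intro f hf
    simp only [Finset.coe_filter, Finset.mem_univ, true_and, Set.mem_ofPred_eq] at hf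
    simp [Finset.mem_piAntidiag, hf.1]

theorem cast_B (ℓ r n : ℕ) (R : Type*) [CommSemiring R] :
    (B ℓ r n : R) = coeff n (regularSeries ℓ R ^ r) := by
  classical
  have h : regularSeries ℓ R ^ r = ∏ _i : Fin r, regularSeries ℓ R := by simp
  rw [h, PowerSeries.coeff_prod, B_eq_sum, Finset.finsuppAntidiag, Finset.sum_map]
  simp only [regularSeries, coeff_mk, Nat.cast_sum, Nat.cast_prod]
  rw [← Finset.sum_attach]
  rfl

theorem pow_prime_eq_expand (p : ℕ) [hp : Fact p.Prime] (f : PowerSeries (ZMod p)) :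
    f ^ p = expand p hp.out.ne_zero f := by
  have h := MvPowerSeries.map_frobenius_expand p hp.out.ne_zero (f := f)
  rw [← h, ZMod.frobenius_zmod]
  simp [expand]

/-- Glaisher's theorem together with `1 + x + x ^ 2 = (1 - x) ^ 2` modulo `3`. -/
theorem regularSeries_eq_sq : regularSeries 3 (ZMod 3) = pentagonalSeries (ZMod 3) ^ 2 := by
  let : TopologicalSpace (ZMod 3) := ⊥
  have : DiscreteTopology (ZMod 3) := ⟨rfl⟩
  open scoped PowerSeries.WithPiTopology in
  have h1 := Nat.Partition.hasProd_powerSeriesMk_card_countRestricted (ZMod 3) (m := 3) (by norm_num)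
  open scoped PowerSeries.WithPiTopology in
  have h2 := (WithPiTopology.hasProd_one_sub_X_pow (ZMod 3)).mul
    (WithPiTopology.hasProd_one_sub_X_pow (ZMod 3))
  have h3 : (3 : PowerSeries (ZMod 3)) = 0 := by
    rw [← map_ofNat (C (R := ZMod 3)) 3, show (OfNat.ofNat 3 : ZMod 3) = 0 from rfl, map_zero]
  rw [regularSeries, Nat.Partition.powerSeriesMk_card_restricted_eq_powerSeriesMk_card_countRestricted
    (ZMod 3) (by norm_num), sq]
  refine h1.unique ?_
  have hterm : (fun i : ℕ ↦ ∑ j ∈ Finset.range 3, (X : PowerSeries (ZMod 3)) ^ ((i + 1) * j)) =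
      fun i ↦ (1 - X ^ (i + 1)) * (1 - X ^ (i + 1)) := by
    funext i
    rw [Finset.sum_range_succ, Finset.sum_range_succ, Finset.sum_range_one]
    linear_combination X ^ (i + 1) * h3
  rw [hterm]
  exact h2

/-- A nonzero coefficient of `E(X) ^ 10 ≡ E(X) * E(X ^ 9)` modulo `3` comes from a representation
`24 M + 10 = (6 k - 1) ^ 2 + (3 (6 l - 1)) ^ 2`. -/
theorem exists_sq_add_sq_of_coeff_ne_zero (M : ℕ)
    (h : coeff M (pentagonalSeries (ZMod 3) ^ 10) ≠ 0) :
    ∃ x y : ℕ, 24 * M + 10 = x ^ 2 + y ^ 2 := by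
  have h10 : pentagonalSeries (ZMod 3) ^ 10 = pentagonalSeries (ZMod 3) *
      expand 3 (by norm_num) (expand 3 (by norm_num) (pentagonalSeries (ZMod 3))) := by
    rw [← pow_prime_eq_expand, ← pow_prime_eq_expand]
    ring
  rw [h10, coeff_mul] at h
  obtain ⟨⟨a, b⟩, hab, hne⟩ := Finset.exists_ne_zero_of_sum_ne_zero h
  rw [Finset.HasAntidiagonal.mem_antidiagonal] at hab
  have hb := right_ne_zero_of_mul hne
  have ha := left_ne_zero_of_mul hne
  simp only [coeff_expand, ne_eq, ite_eq_right_iff, not_forall] at hb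
  obtain ⟨d1, d2, hb⟩ := hb
  rw [coeff_pentagonalSeries_eq_zero_iff, not_not] at hb
  rw [ne_eq, coeff_pentagonalSeries_eq_zero_iff, not_not] at ha
  obtain ⟨k, hk⟩ := ha
  obtain ⟨l, hl⟩ := hb
  have hk2 := two_mul_natCast_pentagonal k
  have hl2 := two_mul_natCast_pentagonal l
  have hM : (M : ℤ) = pentagonal k + 9 * pentagonal l := by
    dsimp only at hab hk hl d1 d2
    omega
  refine ⟨(6 * k - 1).natAbs, (3 * (6 * l - 1)).natAbs, ?_⟩
  zify
  rw [sq_abs, sq_abs, hM]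
  linear_combination 12 * hk2 + 108 * hl2

theorem not_sq_add_sq (p : ℕ) (hp : p.Prime) (hpm : p % 4 = 3) (t c : ℕ) (hc : ¬ p ∣ c) :
    ¬ ∃ x y : ℕ, p ^ (2 * t + 1) * c = x ^ 2 + y ^ 2 := by
  have := Fact.mk hp
  have hc0 : c ≠ 0 := by rintro rfl; simp at hc
  rw [Nat.eq_sq_add_sq_iff]
  intro h
  have h1 := h (q := p)
    (Nat.mem_primeFactors.2 ⟨hp, (dvd_pow_self p (by omega)).mul_right c,
      mul_ne_zero (pow_ne_zero _ hp.ne_zero) hc0⟩) hpm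
  rw [padicValNat.mul (pow_ne_zero _ hp.ne_zero) hc0, padicValNat.prime_pow,
    padicValNat.eq_zero_of_not_dvd hc] at h1
  grind

theorem B_mod_five (N : ℕ) (h : ¬ 5 ∣ N) : 5 ∣ B 3 15 N := by
  rw [← ZMod.natCast_eq_zero_iff, cast_B]
  have := Fact.mk (show Nat.Prime 5 by norm_num)
  rw [show 15 = 3 * 5 by norm_num, pow_mul, pow_prime_eq_expand]
  exact coeff_expand_of_not_dvd _ _ _ h

theorem B_mod_three (M : ℕ) (h : ¬ ∃ x y : ℕ, 24 * M + 10 = x ^ 2 + y ^ 2) :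
    3 ∣ B 3 15 (3 * M) := by
  rw [← ZMod.natCast_eq_zero_iff, cast_B, regularSeries_eq_sq, ← pow_mul,
    show 2 * 15 = 10 * 3 by norm_num, pow_mul, pow_prime_eq_expand, coeff_expand_mul]
  by_contra hne
  exact h (exists_sq_add_sq_of_coeff_ne_zero M hne)

theorem stmt_9 (α : ℕ) (hα : α ∈ ({1, 2, 3, 4} : Finset ℕ))
    (p : ℕ) (hp : Nat.Prime p) (hp3 : p ≠ 3) (hpm : p % 4 = 3)
    (j : ℕ) (hj : 0 < j) (hj5 : 5 ∣ j) (hjd : ¬ p ∣ j) (n t : ℕ) :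
    B 3 15 (15 * p ^ (2 * t + 2) * n +
      (p ^ (2 * t + 1) * ((12 * α + 5) * p + 12 * j) - 5) / 4) ≡ 0 [MOD 15] := by
  set N := 15 * p ^ (2 * t + 2) * n +
      (p ^ (2 * t + 1) * ((12 * α + 5) * p + 12 * j) - 5) / 4 with hN
  have hdvd (q : ℕ) (hq : q.Prime) (hpq : q ≠ p) : ¬ q ∣ p := fun h ↦
    hpq ((Nat.prime_dvd_prime_iff_eq hq hp).1 h)
  have hsq : p ^ (2 * t + 2) = (p ^ 2) ^ (t + 1) := by rw [← pow_mul]; ring_nf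
  have h4 : p ^ (2 * t + 2) % 4 = 1 := by
    rw [hsq, Nat.pow_mod, show p ^ 2 % 4 = 1 by rw [Nat.pow_mod, hpm]]
    simp
  have h3 : p ^ (2 * t + 2) % 3 = 1 := by
    have h3p := hdvd 3 (by norm_num) hp3.symm
    have : p ^ 2 % 3 = 1 := by
      rcases (by omega : p % 3 = 1 ∨ p % 3 = 2) with h | h <;> rw [Nat.pow_mod, h]
    rw [hsq, Nat.pow_mod, this]
    simp
  have h5 : ¬ 5 ∣ p ^ (2 * t + 2) := fun h ↦
    hdvd 5 (by norm_num) (by omega) (Nat.Prime.dvd_of_dvd_pow (by norm_num) h)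
  have hexp : p ^ (2 * t + 1) * ((12 * α + 5) * p + 12 * j) =
      12 * (α * p ^ (2 * t + 2)) + 5 * p ^ (2 * t + 2) + 12 * (p ^ (2 * t + 1) * j) := by ring
  have hexpN : 15 * p ^ (2 * t + 2) * n = 15 * (p ^ (2 * t + 2) * n) := by ring
  have hpos : 0 < p ^ (2 * t + 2) := pow_pos hp.pos _
  have hN4 : 4 * N + 5 = 60 * (p ^ (2 * t + 2) * n) + 12 * (α * p ^ (2 * t + 2)) +
      5 * p ^ (2 * t + 2) + 12 * (p ^ (2 * t + 1) * j) := by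
    rw [hN, hexp, hexpN]
    omega
  have hB5 : 5 ∣ B 3 15 N := by
    apply B_mod_five
    have hα5 : ¬ 5 ∣ α * p ^ (2 * t + 2) := by
      rw [Nat.Prime.dvd_mul (by norm_num)]
      simp only [Finset.mem_insert, Finset.mem_singleton] at hα
      omega
    have hj5' : 5 ∣ p ^ (2 * t + 1) * j := hj5.mul_left _
    omega
  have hB3 : 3 ∣ B 3 15 N := by
    obtain ⟨M, hM⟩ : 3 ∣ N := by omega
    rw [hM]
    apply B_mod_three
    have hval : 24 * M + 10 =
        p ^ (2 * t + 1) * (p * (2 * (60 * n + 12 * α + 5)) + 24 * j) := by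
      have : 24 * M + 10 = 2 * (4 * N + 5) := by omega
      rw [this, hN4]
      ring
    rw [hval]
    apply not_sq_add_sq p hp hpm
    rw [Nat.dvd_add_right (Dvd.intro _ rfl), hp.dvd_mul, not_or]
    refine ⟨fun h ↦ ?_, hjd⟩
    rw [show 24 = 2 ^ 3 * 3 by norm_num, hp.dvd_mul] at h
    rcases h with h | h
    · have := (Nat.prime_dvd_prime_iff_eq hp Nat.prime_two).1 (hp.dvd_of_dvd_pow h)
      omega
    · exact hp3 ((Nat.prime_dvd_prime_iff_eq hp Nat.prime_three).1 h)
  rw [Nat.modEq_zero_iff_dvd]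
  omega
end

section
/- For all integers n ≥ 0 and t ≥ 0, B_5^{(20t+1)}(20n + 14) ≡ 0 (mod 10). -/
open PowerSeries Finset

/-! ### Finite Euler products -/

/-- The finite `q`-Pochhammer symbol `(q; q)_n = ∏_{i = 1}^{n} (1 - q ^ i)` with `q = X`. -/
noncomputable def qPoch (R : Type*) [CommRing R] (n : ℕ) : R⟦X⟧ :=
  ∏ i ∈ range n, (1 - X ^ (i + 1))

section
variable {R : Type*} [CommRing R]

lemma qPoch_succ (n : ℕ) : qPoch R (n + 1) = qPoch R n * (1 - X ^ (n + 1)) :=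
  prod_range_succ _ _

lemma constantCoeff_qPoch (n : ℕ) : constantCoeff (qPoch R n) = 1 := by
  simp [qPoch, map_prod]

/-- The inverse power series of `qPoch R n`. -/
noncomputable def qPochInv (R : Type*) [CommRing R] (n : ℕ) : R⟦X⟧ := invOfUnit (qPoch R n) 1

lemma qPoch_mul_inv (n : ℕ) : qPoch R n * qPochInv R n = 1 :=
  mul_invOfUnit _ _ (by simp [constantCoeff_qPoch])

/-- Euler's product agrees with its partial products of length at least `d` up to degree `d`. -/
lemma X_pow_dvd_pentagonal_sub_qPoch (d N : ℕ) (h : d ≤ N) :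
    X ^ (d + 1) ∣ pentagonalSeries R - qPoch R N := by
  rw [X_pow_dvd_iff]
  intro m hm
  have key : ∀ M, N ≤ M → (qPoch R M).coeff m = (qPoch R N).coeff m := by
    intro M hM
    induction M, hM using Nat.le_induction with
    | base => rfl
    | succ M hM ih =>
      rw [qPoch_succ, mul_sub, mul_one, map_sub, ih, coeff_mul_X_pow', if_neg (by omega), sub_zero]
  obtain ⟨s, hs⟩ := Filter.eventually_atTop.mp (coeff_prod_one_sub_X_pow_eventually_eq R m)
  have h1 := hs (range (N + s.sup id + 1)) (fun x hx ↦ by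
    have := Finset.le_sup (f := id) hx
    simp only [id, mem_range] at *
    omega)
  have h2 := key (N + s.sup id + 1) (by omega)
  rw [map_sub, ← h1, ← h2, qPoch, sub_self]

lemma isUnit_pentagonalSeries : IsUnit (pentagonalSeries R) := by
  rw [isUnit_iff_constantCoeff]
  have h := coeff_pentagonalSeries_pentagonal R 0
  simp [pentagonal_def] at h
  simp [h]

/-! ### Gaussian binomials and the finite Jacobi identity -/

/-- The `k`-th elementary symmetric polynomial of `1, X, …, X ^ (m - 1)`, i.e. `X ^ (k (k - 1) / 2)`
times the Gaussian binomial coefficient, defined by its Pascal-type recursion. -/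
noncomputable def qBinom (R : Type*) [CommRing R] : ℕ → ℕ → R⟦X⟧
  | _, 0 => 1
  | 0, _ + 1 => 0
  | m + 1, k + 1 => qBinom R m (k + 1) + X ^ m * qBinom R m k

lemma qBinom_zero_right (m : ℕ) : qBinom R m 0 = 1 := by cases m <;> rfl

lemma qBinom_eq_zero : ∀ {m k : ℕ}, m < k → qBinom R m k = 0
  | _, 0, h => by omega
  | 0, _ + 1, _ => rfl
  | m + 1, k + 1, h => by
    rw [qBinom, qBinom_eq_zero (by omega), qBinom_eq_zero (by omega)]; simp

/-- The closed form of `qBinom`, with denominators cleared. -/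
lemma qBinom_mul (k l : ℕ) :
    qBinom R (k + l) k * qPoch R k * qPoch R l = X ^ (k * (k - 1) / 2) * qPoch R (k + l) := by
  induction hm : k + l generalizing k l with
  | zero =>
    obtain rfl : k = 0 := by omega
    obtain rfl : l = 0 := by omega
    simp [qBinom, qPoch]
  | succ m ih =>
    rcases k with _ | k
    · obtain rfl : l = m + 1 := by omega
      simp [qBinom, qPoch]
    rcases l with _ | l
    · obtain rfl : k = m := by omega
      have := ih k 0 (by omega)
      rw [qBinom, qBinom_eq_zero (Nat.lt_succ_self k), zero_add, qPoch_succ]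
      have e : (k + 1) * (k + 1 - 1) / 2 = k + k * (k - 1) / 2 := by
        rcases k with _ | k
        · rfl
        · simp only [Nat.add_sub_cancel]
          rw [show (k + 1 + 1) * (k + 1) = (k+1) * k + 2 * (k + 1) by ring]
          omega
      rw [e, pow_add]
      simp only [qPoch, range_zero, prod_empty, mul_one] at this ⊢
      linear_combination X ^ k * (1 - X ^ (k + 1)) * this
    · have h1 := ih (k + 1) l (by omega)
      have h2 := ih k (l + 1) (by omega)
      obtain rfl : m = k + 1 + l := by omega
      have e : (k + 1) * (k + 1 - 1) / 2 = k + k * (k - 1) / 2 := by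
        rcases k with _ | k
        · rfl
        · simp only [Nat.add_sub_cancel]
          rw [show (k + 1 + 1) * (k + 1) = (k+1) * k + 2 * (k + 1) by ring]
          omega
      rw [e, pow_add] at h1 ⊢
      rw [qBinom]
      simp only [qPoch_succ] at *
      linear_combination (1 - X ^ (l + 1)) * h1 + X ^ (k + 1 + l) * (1 - X ^ (k + 1)) * h2

/-- The `q`-binomial theorem, as an identity of polynomials over `R⟦X⟧`. -/
lemma qBinom_theorem (m : ℕ) :
    ∏ j ∈ range m, ((Polynomial.X : Polynomial R⟦X⟧) - Polynomial.C (PowerSeries.X ^ j)) =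
    ∑ k ∈ range (m + 1), Polynomial.C ((-1) ^ k * qBinom R m k) * Polynomial.X ^ (m - k) := by
  induction m with
  | zero => simp [qBinom]
  | succ m ih =>
    rw [prod_range_succ, ih, sum_range_succ' _ (m + 1), mul_sub, sum_mul, sum_mul, sub_eq_add_neg,
      ← sum_neg_distrib]
    have h1 : ∑ k ∈ range (m + 1), Polynomial.C ((-1) ^ k * qBinom R m k) * Polynomial.X ^ (m - k)
        * Polynomial.X = ∑ k ∈ range (m + 1), Polynomial.C ((-1) ^ (k + 1) * qBinom R m (k + 1)) *
          Polynomial.X ^ (m - k) + Polynomial.X ^ (m + 1) := by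
      have : ∀ k ∈ range (m + 1), Polynomial.C ((-1) ^ k * qBinom R m k) * Polynomial.X ^ (m - k)
        * Polynomial.X = Polynomial.C ((-1) ^ k * qBinom R m k) * Polynomial.X ^ (m + 1 - k) := by
        intro k hk
        rw [mul_assoc, ← pow_succ]
        congr 2
        simp at hk
        omega
      rw [sum_congr rfl this, sum_range_succ' _ m, sum_range_succ _ m,
        qBinom_eq_zero (Nat.lt_succ_self m)]
      simp [qBinom_zero_right]
    rw [h1, add_right_comm, ← sum_add_distrib]
    congr 1
    · refine sum_congr rfl fun k hk ↦ ?_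
      rw [qBinom, Nat.add_sub_add_right]
      simp only [map_mul, map_add, map_pow, map_neg, map_one]
      ring
    · simp [qBinom]

lemma half_mul_pred (k : ℕ) : 2 * (k * (k - 1) / 2) + k = k * k := by
  rcases k with _ | k
  · rfl
  · rw [Nat.mul_div_cancel' (Nat.even_mul_pred_self _).two_dvd]
    simp only [Nat.add_sub_cancel]; ring

lemma half_mul_succ (k : ℕ) : 2 * (k * (k + 1) / 2) = k * k + k := by
  rw [Nat.mul_div_cancel' (Nat.even_mul_succ_self _).two_dvd]; ring

/-- The derivative of the `q`-binomial theorem for `m = 2 n + 1`, evaluated at the root `X ^ n` of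
the product; only the term omitting the vanishing factor survives on the right. -/
lemma qBinom_deriv (n : ℕ) :
    ∑ k ∈ range (2 * n + 2), (-1) ^ k * qBinom R (2 * n + 1) k * ((2 * n + 1 - k : ℕ) : R⟦X⟧) *
      (X ^ n) ^ (2 * n - k) = (-1) ^ n * X ^ (n * (n - 1) / 2 + n * n) * qPoch R n ^ 2 := by
  have h := congrArg (fun p ↦ (Polynomial.derivative p).eval (X ^ n))
    (qBinom_theorem (R := R) (2 * n + 1))
  rw [Polynomial.derivative_sum, Polynomial.eval_finsetSum] at h
  have h2 : ∀ k ∈ range (2 * n + 2), (-1) ^ k * qBinom R (2 * n + 1) k * ((2 * n + 1 - k : ℕ) : R⟦X⟧) *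
      (X ^ n) ^ (2 * n - k) = Polynomial.eval (X ^ n) (Polynomial.derivative
        (Polynomial.C ((-1) ^ k * qBinom R (2 * n + 1) k) * Polynomial.X ^ (2 * n + 1 - k))) := by
    intro k hk
    rw [Polynomial.derivative_C_mul_X_pow, Polynomial.eval_mul, Polynomial.eval_C,
      Polynomial.eval_pow, Polynomial.eval_X, show 2 * n + 1 - k - 1 = 2 * n - k by omega]
  rw [sum_congr rfl h2, ← h, show 2 * n + 1 = n + (n + 1) by ring, prod_range_add,
    prod_range_succ']
  simp only [add_zero, Polynomial.derivative_mul, Polynomial.eval_add, Polynomial.eval_mul,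
    Polynomial.eval_sub, Polynomial.eval_X, Polynomial.eval_C, sub_self, mul_zero, zero_add,
    Polynomial.derivative_sub, Polynomial.derivative_X, Polynomial.derivative_C, sub_zero,
    mul_one, Polynomial.eval_prod]
  have h3 : ∏ i ∈ range n, ((X : R⟦X⟧) ^ n - X ^ (n + (i + 1))) = X ^ (n * n) * qPoch R n := by
    have : ∀ i ∈ range n, (X : R⟦X⟧) ^ n - X ^ (n + (i + 1)) = X ^ n * (1 - X ^ (i + 1)) :=
      fun i _ ↦ by ring
    rw [prod_congr rfl this, prod_mul_distrib, prod_const, card_range, ← pow_mul, qPoch]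
  have h4 : ∏ i ∈ range n, ((X : R⟦X⟧) ^ n - X ^ i) =
      (-1) ^ n * X ^ (n * (n - 1) / 2) * qPoch R n := by
    have : ∀ i ∈ range n, ((X : R⟦X⟧) ^ n - X ^ i) = (-1) * X ^ i * (1 - X ^ (n - 1 - i + 1)) := by
      intro i hi
      simp at hi
      have : (X : R⟦X⟧) ^ n = X ^ i * X ^ (n - 1 - i + 1) := by rw [← pow_add]; congr 1; omega
      rw [this]; ring
    rw [prod_congr rfl this, prod_mul_distrib, prod_mul_distrib, prod_const, card_range,
      prod_pow_eq_pow_sum, sum_range_id, prod_range_reflect (fun i ↦ (1 : R⟦X⟧) - X ^ (i + 1)) n]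
    rfl
  rw [h3, h4, pow_add]
  ring

/-- A finite form of Jacobi's identity, obtained from `qBinom_deriv` by pairing the indices
`k = n - j` and `k = n + 1 + j`, which carry the same power of `X` and opposite signs. The factor in
parentheses is the Gaussian binomial coefficient of `2 n + 1` over `n - j`. -/
lemma finite_jacobi (n : ℕ) :
    ∑ j ∈ range (n + 1), (-1) ^ j * (2 * j + 1 : R⟦X⟧) * X ^ (j * (j + 1) / 2) *
      (qPoch R (2 * n + 1) * qPochInv R (n - j) * qPochInv R (n + 1 + j)) = qPoch R n ^ 2 := by
  have hE : ∀ k l, qBinom R (k + l) k =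
      X ^ (k * (k - 1) / 2) * (qPoch R (k + l) * qPochInv R k * qPochInv R l) := by
    intro k l
    linear_combination qPochInv R k * qPochInv R l * qBinom_mul (R := R) k l
      - qBinom R (k + l) k * qPoch_mul_inv (R := R) k
      - qBinom R (k + l) k * qPoch R k * qPochInv R k * qPoch_mul_inv (R := R) l
  have h := qBinom_deriv (R := R) n
  rw [show 2 * n + 2 = (n + 1) + (n + 1) by ring, sum_range_add, ← sum_range_reflect,
    ← sum_add_distrib] at h
  refine X_pow_mul_cancel (k := n * (n - 1) / 2 + n * n) ?_
  have h' := congrArg (fun z ↦ (-1) ^ n * z) h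
  have hs : ((-1 : R⟦X⟧) ^ n) * (-1) ^ n = 1 := by rw [← mul_pow]; simp
  rw [← mul_assoc, ← mul_assoc, hs, one_mul] at h'
  rw [← h', mul_sum, mul_sum]
  refine sum_congr rfl fun j hj ↦ ?_
  obtain ⟨i, rfl⟩ : ∃ i, n = j + i := Nat.exists_eq_add_of_le (by simp at hj; omega)
  rw [show j + i + 1 - 1 - j = i by omega]
  have e1 : qBinom R (2 * (j + i) + 1) i = _ :=
    (congrArg₂ _ (by omega) (by omega)).trans (hE i (j + i + 1 + j))
  have e2 : qBinom R (2 * (j + i) + 1) (j + i + 1 + j) = _ :=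
    (congrArg₂ _ (by omega) (by omega)).trans (hE (j + i + 1 + j) i)
  have s1 : ((-1 : R⟦X⟧) ^ (j + i)) * (-1) ^ i = (-1) ^ j := by
    rw [← pow_add, show j + i + i = j + 2 * i by omega, pow_add, pow_mul]
    simp
  have s2 : ((-1 : R⟦X⟧) ^ (j + i)) * (-1) ^ (j + i + 1 + j) = - (-1) ^ j := by
    rw [← pow_add, show j + i + (j + i + 1 + j) = 2 * (j + i) + (j + 1) by omega, pow_add, pow_mul]
    simp [pow_succ]
  have p0 : (X : R⟦X⟧) ^ ((j + i) * (j + i - 1) / 2 + (j + i) * (j + i)) * X ^ (j * (j + 1) / 2)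
      = X ^ (i * (i - 1) / 2) * (X ^ (j + i)) ^ (2 * (j + i) - i) := by
    rw [← pow_mul, ← pow_add, ← pow_add]
    congr 1
    have a1 := half_mul_pred (j + i)
    have a2 := half_mul_succ j
    have a3 := half_mul_pred i
    rw [show 2 * (j + i) - i = 2 * j + i by omega]
    nlinarith
  -- For `i = 0` the exponents differ (truncated subtraction), but the factor `i` kills both sides.
  have p1 : (X : R⟦X⟧) ^ ((j + i) * (j + i - 1) / 2 + (j + i) * (j + i)) * X ^ (j * (j + 1) / 2)
      * (i : R⟦X⟧) = X ^ ((j + i + 1 + j) * (j + i + 1 + j - 1) / 2) *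
        (X ^ (j + i)) ^ (2 * (j + i) - (j + i + 1 + j)) * (i : R⟦X⟧) := by
    rcases i with _ | i
    · simp
    rw [← pow_mul, ← pow_add, ← pow_add]
    congr 2
    have a1 := half_mul_pred (j + (i + 1))
    have a2 := half_mul_succ j
    have a3 := half_mul_pred (j + (i + 1) + 1 + j)
    rw [show 2 * (j + (i + 1)) - (j + (i + 1) + 1 + j) = i by omega]
    nlinarith
  rw [e1, e2, show 2 * (j + i) + 1 - i = i + 2 * j + 1 by omega,
    show 2 * (j + i) + 1 - (j + i + 1 + j) = i by omega,
    show i + (j + i + 1 + j) = 2 * (j + i) + 1 by omega,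
    show j + i + 1 + j + i = 2 * (j + i) + 1 by omega, show j + i - j = i by omega]
  push_cast
  set g := qPoch R (2 * (j + i) + 1) * qPochInv R i * qPochInv R (j + i + 1 + j) with hg
  rw [show qPoch R (2 * (j + i) + 1) * qPochInv R (j + i + 1 + j) * qPochInv R i = g by
    rw [hg]; ring]
  generalize (X : R⟦X⟧) ^ (j + i) = y at *
  linear_combination (g * (-1) ^ j * (i + 2 * j + 1)) * p0 - g * (-1) ^ j * p1
    - (X ^ (i * (i - 1) / 2) * y ^ (2 * (j + i) - i) * g * (i + 2 * j + 1)) * s1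
    - (X ^ ((j + i + 1 + j) * (j + i + 1 + j - 1) / 2) *
        y ^ (2 * (j + i) - (j + i + 1 + j)) * g * i) * s2

/-! ### Jacobi's identity for the cube of Euler's product -/

/-- Jacobi's identity `∏ (1 - X ^ i) ^ 3 = ∑ (-1) ^ j (2 j + 1) X ^ (j (j + 1) / 2)`, modulo
`X ^ (d + 1)`. It is the limit of `finite_jacobi`: modulo `X ^ (d + 1)` every `qPoch R N` with
`d ≤ N` agrees with Euler's product, so each Gaussian binomial that matters times Euler's product
becomes `1`. -/
lemma pentagonal_cube (d : ℕ) :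
    X ^ (d + 1) ∣ pentagonalSeries R ^ 3 -
      ∑ j ∈ range (d + 1), (-1) ^ j * (2 * j + 1 : R⟦X⟧) * X ^ (j * (j + 1) / 2) := by
  rw [← Ideal.mem_span_singleton, ← Ideal.Quotient.eq]
  set φ := Ideal.Quotient.mk (Ideal.span {(X : R⟦X⟧) ^ (d + 1)})
  have hP : ∀ N, d ≤ N → φ (qPoch R N) = φ (pentagonalSeries R) := fun N hN ↦
    ((Ideal.Quotient.eq).mpr
      (Ideal.mem_span_singleton.mpr (X_pow_dvd_pentagonal_sub_qPoch d N hN))).symm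
  have hI : ∀ N, d ≤ N → φ (pentagonalSeries R) * φ (qPochInv R N) = 1 := fun N hN ↦ by
    rw [← hP N hN, ← map_mul, qPoch_mul_inv, map_one]
  have hJ := congrArg φ (finite_jacobi (R := R) (2 * d))
  rw [map_pow, hP _ (by omega), map_sum, show 2 * d + 1 = (d + 1) + d by ring,
    sum_range_add] at hJ
  rw [map_pow, pow_succ (φ _), ← hJ, add_mul, sum_mul, sum_mul, map_sum]
  rw [sum_eq_zero (s := range d), add_zero]
  · refine sum_congr rfl fun j hj ↦ ?_
    simp only [mem_range] at hj
    rw [map_mul φ (_ * X ^ _), map_mul φ (_ * _) (qPochInv R _), map_mul φ (qPoch R _),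
      hP (2 * (2 * d) + 1) (by omega)]
    have h1 := hI (2 * d - j) (by omega)
    have h2 := hI (d + 1 + d + j) (by omega)
    generalize φ (_ * _ * X ^ _) = z
    linear_combination z * (φ (pentagonalSeries R) * φ (qPochInv R (d + 1 + d + j))) * h1 + z * h2
  · intro j _
    have : φ (X ^ ((d + 1 + j) * (d + 1 + j + 1) / 2)) = 0 := by
      rw [Ideal.Quotient.eq_zero_iff_mem, Ideal.mem_span_singleton]
      exact pow_dvd_pow _ (by have := half_mul_succ (d + 1 + j); nlinarith)
    simp only [map_mul, this]
    ring

lemma coeff_pentagonal_cube (d : ℕ) :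
    (pentagonalSeries R ^ 3).coeff d =
      ∑ j ∈ range (d + 1), if d = j * (j + 1) / 2 then (-1) ^ j * (2 * j + 1 : R) else 0 := by
  have h := X_pow_dvd_iff.mp (pentagonal_cube (R := R) d) d (by omega)
  rw [map_sub, sub_eq_zero] at h
  rw [h, map_sum]
  refine sum_congr rfl fun j _ ↦ ?_
  have : (-1) ^ j * (2 * j + 1 : R⟦X⟧) = C ((-1) ^ j * (2 * j + 1 : R)) := by
    simp [show (C (2 : R) : R⟦X⟧) = 2 from map_ofNat _ 2]
  rw [this, coeff_C_mul, coeff_X_pow]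
  simp

/-! ### Generating functions of regular multipartitions -/

/-- The generating function of partitions with no part divisible by `m`, with coefficients
reduced into `R`. -/
noncomputable def regGF (R : Type*) [CommRing R] (m : ℕ) : R⟦X⟧ :=
  PowerSeries.mk fun n ↦ (#(Nat.Partition.restricted n (¬ m ∣ ·)) : R)

open PowerSeries.WithPiTopology in
/-- With `f_m = ∏ (1 - X ^ (m i))`, this is `(f_m / f_1) * f_1 = f_m`. -/
lemma regGF_mul {m : ℕ} (hm : m ≠ 0) :
    regGF R m * pentagonalSeries R = (pentagonalSeries R).expand m hm := by
  let : TopologicalSpace R := ⊥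
  have : DiscreteTopology R := ⟨rfl⟩
  have h1 := Nat.Partition.hasProd_powerSeriesMk_card_countRestricted R (Nat.pos_of_ne_zero hm)
  simp_rw [← Nat.Partition.card_restricted_eq_card_countRestricted _
    (Nat.pos_of_ne_zero hm)] at h1
  have h2 := h1.mul (hasProd_one_sub_X_pow R)
  have hc : Continuous (expand m hm : R⟦X⟧ →ₐ[R] R⟦X⟧) := by
    rw [continuous_iff_continuousAt]
    intro f
    rw [ContinuousAt, tendsto_iff_coeff_tendsto]
    intro d
    simp only [coeff_expand]
    split_ifs
    · exact (continuous_coeff R _).tendsto f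
    · exact tendsto_const_nhds
  have h3 := (hasProd_one_sub_X_pow R).map (expand m hm : R⟦X⟧ →ₐ[R] R⟦X⟧) hc
  have h4 : (fun i ↦ (∑ j ∈ range m, (X : R⟦X⟧) ^ ((i + 1) * j)) * (1 - X ^ (i + 1))) =
      (expand m hm : R⟦X⟧ →ₐ[R] R⟦X⟧) ∘ fun i ↦ 1 - X ^ (i + 1) := by
    funext i
    rw [Function.comp_apply, map_sub, map_one, map_pow, expand_X]
    simp_rw [pow_mul]
    rw [geom_sum_mul_neg, ← pow_mul, ← pow_mul, mul_comm]
  rw [← h4] at h3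
  exact h2.unique h3

/-- Over the prime field, substituting `X ^ p` for `X` is the Frobenius. -/
lemma expand_eq_pow (p : ℕ) [Fact p.Prime] (hp : p ≠ 0) (f : (ZMod p)⟦X⟧) :
    f.expand p hp = f ^ p := by
  have := MvPowerSeries.map_frobenius_expand (σ := Unit) (R := ZMod p) p hp (f := f)
  rw [ZMod.frobenius_zmod, MvPowerSeries.map_id] at this
  exact this

/-- Multiplying by a series in `X ^ m` preserves vanishing of the coefficients on a residue class
modulo `m`. -/
lemma coeff_mul_expand_eq_zero (m c : ℕ) (hm : m ≠ 0) (A D : R⟦X⟧)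
    (hA : ∀ n, n % m = c → A.coeff n = 0) (n : ℕ) (hn : n % m = c) :
    (A * D.expand m hm).coeff n = 0 := by
  rw [coeff_mul]
  refine sum_eq_zero fun p hp ↦ ?_
  rw [HasAntidiagonal.mem_antidiagonal] at hp
  by_cases h : m ∣ p.2
  · obtain ⟨k, hk⟩ := h
    rw [hA, zero_mul]
    rw [← hn, ← hp, hk, Nat.add_mul_mod_self_left]
  · rw [coeff_expand_of_not_dvd _ _ _ h, mul_zero]

lemma B_eq_coeff_s10 (ℓ r n : ℕ) : (B ℓ r n : R) = (regGF R ℓ ^ r).coeff n := by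
  classical
  -- `∑ s, F s` is the truncation of the generating function to degree at most `n`, written as a sum
  -- over the alphabet used in the definition of `B`, so that its `r`-th power expands over tuples.
  let F : (Σ a : Fin (n + 1), Nat.Partition a) → R⟦X⟧ := fun s ↦
    if ∀ part ∈ s.2.parts, ¬ ℓ ∣ part then X ^ (s.1 : ℕ) else 0
  have hF : X ^ (n + 1) ∣ regGF R ℓ - ∑ s, F s := by
    rw [X_pow_dvd_iff]
    intro m hm
    rw [map_sub, sub_eq_zero, map_sum, Fintype.sum_sigma, sum_eq_single ⟨m, hm⟩]
    · simp [F, regGF, Nat.Partition.restricted, apply_ite, coeff_X_pow]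
    · intro b _ hb
      refine sum_eq_zero fun s _ ↦ ?_
      have : m ≠ b := fun h ↦ hb (Fin.ext h.symm)
      simp [F, apply_ite, coeff_X_pow, this]
    · simp
  have h := X_pow_dvd_iff.mp (hF.trans (sub_dvd_pow_sub_pow _ _ r)) n (by omega)
  rw [map_sub, sub_eq_zero] at h
  rw [h, Fintype.sum_pow, map_sum, B, Fintype.card_subtype, card_filter, Nat.cast_sum]
  refine sum_congr rfl fun f _ ↦ ?_
  by_cases hf : ∀ i, ∀ part ∈ (f i).2.parts, ¬ ℓ ∣ part
  · have : ∏ i, F (f i) = X ^ (∑ i, ((f i).1 : ℕ)) := by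
      rw [← prod_pow_eq_pow_sum]
      exact prod_congr rfl fun i _ ↦ if_pos (hf i)
    rw [this, coeff_X_pow]
    simp only [eq_comm (a := n), and_iff_left hf]
    simp
  · obtain ⟨i, hi⟩ := not_forall.mp hf
    rw [prod_eq_zero (mem_univ i) (if_neg hi)]
    simp [hf]

/-! ### Divisibility by 5 -/

/-- With `a = x (3 x - 1) / 2` pentagonal and `b = y (y + 1) / 2` triangular, `a + b ≡ 4 (mod 5)`
says `(6 x - 1) ^ 2 + 3 (2 y + 1) ^ 2 ≡ 0`, and `-3` is not a square modulo `5`. -/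
lemma zmod_five_aux : ∀ x y : ZMod 5, x * (3 * x - 1) + (y * y + y) = 8 → 2 * y + 1 = 0 := by
  decide

lemma five_dvd (n t : ℕ) : ((B 5 (20 * t + 1) (20 * n + 14) : ℕ) : ZMod 5) = 0 := by
  have : Fact (Nat.Prime 5) := ⟨by norm_num⟩
  set E := pentagonalSeries (ZMod 5)
  have hg : regGF (ZMod 5) 5 = E ^ 4 := by
    have h := regGF_mul (R := ZMod 5) (m := 5) (by norm_num)
    rw [expand_eq_pow] at h
    refine isUnit_pentagonalSeries.mul_right_cancel ?_
    rw [h]; ring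
  rw [B_eq_coeff_s10, hg, show (E ^ 4) ^ (20 * t + 1) = E ^ 4 * (E ^ (16 * t)) ^ 5 by ring,
    ← expand_eq_pow 5 (by norm_num)]
  refine coeff_mul_expand_eq_zero 5 4 _ _ _ ?_ _ (by omega)
  intro m hm
  rw [show E ^ 4 = E * E ^ 3 by ring, coeff_mul]
  refine sum_eq_zero fun p hp ↦ ?_
  rw [HasAntidiagonal.mem_antidiagonal] at hp
  by_cases h : p.1 ∈ Set.range pentagonal
  · obtain ⟨k, hk⟩ := h
    rw [coeff_pentagonal_cube, sum_eq_zero, mul_zero]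
    intro j _
    split_ifs with hj
    · have : (2 * j + 1 : ZMod 5) = 0 := by
        have h1 := two_mul_natCast_pentagonal k
        have h2 := half_mul_succ j
        rw [← hj] at h2
        rw [hk] at h1
        refine zmod_five_aux k j ?_
        have h3 : 2 * ((p.1 + p.2 : ℕ) : ℤ) = k * (3 * k - 1) + (j * j + j) := by
          push_cast
          zify at h2
          linarith
        have h4 := congrArg (Int.cast : ℤ → ZMod 5) h3
        rw [hp, ← Nat.div_add_mod m 5, hm] at h4
        push_cast at h4
        rw [← h4, show (5 : ZMod 5) = 0 from rfl]
        ring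
      rw [this, mul_zero]
    · rfl
  · rw [coeff_pentagonalSeries_eq_zero _ h, zero_mul]

/-! ### Divisibility by 2 -/

open Classical in
/-- Writing a triangular number as `(u ^ 2 - 1) / 8` and a pentagonal one as `(v ^ 2 - 1) / 24` with
`v ≡ -1 (mod 6)`, the pairs counted here are the solutions of `3 u ^ 2 + 5 v ^ 2 = 8 (3 e + 1)`, with
`u` up to sign. Fixing the sign of `u` by `u ≡ v (mod 4)` (then even `u ≡ v (mod 8)`, as `3 e + 1` is
odd) and substituting `u = x + 5 w`, `v = x - 3 w` turns this into `x ^ 2 + 15 w ^ 2 = 3 e + 1`. The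
involution `w ↦ -w` has no fixed point, because `3 e + 1 ≡ 3 (mod 4)` is not a square. -/
lemma even_card_rep (e : ℕ) (he : e % 4 = 2) :
    Even (#{p ∈ HasAntidiagonal.antidiagonal e |
      (∃ j : ℕ, p.1 = j * (j + 1) / 2) ∧ ∃ k : ℤ, p.2 = 5 * pentagonal k}) := by
  let M : ℤ := 3 * e + 1
  let F : Finset (ℤ × ℤ) := {z ∈ Icc (-M) M ×ˢ Icc (-M) M |
    z.1 ^ 2 + 15 * z.2 ^ 2 = M ∧ (z.1 - 3 * z.2) % 6 = 5}
  have memF : ∀ x w : ℤ, (x, w) ∈ F ↔ x ^ 2 + 15 * w ^ 2 = M ∧ (x - 3 * w) % 6 = 5 := by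
    intro x w
    simp only [F, mem_filter, mem_product, mem_Icc, and_iff_right_iff_imp]
    rintro ⟨h, -⟩
    refine ⟨⟨?_, ?_⟩, ?_, ?_⟩ <;> nlinarith [Int.le_self_sq x, Int.le_self_sq w,
      Int.le_self_sq (-x), Int.le_self_sq (-w), sq_nonneg x, sq_nonneg w]
  have tri : ∀ j : ℕ, 8 * ((j * (j + 1) / 2 : ℕ) : ℤ) + 1 = (2 * j + 1) ^ 2 := by
    intro j
    have := half_mul_succ j
    zify at this
    push_cast
    linarith
  have pen : ∀ k : ℤ, 24 * ((5 * pentagonal k : ℕ) : ℤ) + 5 = 5 * (6 * k - 1) ^ 2 := by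
    intro k
    have := two_mul_natCast_pentagonal k
    push_cast
    linarith
  let T : ℤ × ℤ → ℕ × ℕ := fun z ↦
    (((z.1 + 5 * z.2).natAbs / 2) * ((z.1 + 5 * z.2).natAbs / 2 + 1) / 2,
      5 * pentagonal ((z.1 - 3 * z.2 + 1) / 6))
  have hT : ∀ x w, (x, w) ∈ F → 8 * ((T (x, w)).1 : ℤ) + 1 = (x + 5 * w) ^ 2 ∧
      24 * ((T (x, w)).2 : ℤ) + 5 = 5 * (x - 3 * w) ^ 2 := by
    intro x w h
    obtain ⟨-, h2⟩ := (memF x w).mp h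
    constructor
    · rw [tri, ← Int.natAbs_sq (x + 5 * w)]
      congr 1
      omega
    · rw [pen]
      congr 2
      omega
  have hcard : #F = #{p ∈ HasAntidiagonal.antidiagonal e |
      (∃ j : ℕ, p.1 = j * (j + 1) / 2) ∧ ∃ k : ℤ, p.2 = 5 * pentagonal k} := by
    refine card_bij (fun z _ ↦ T z) ?_ ?_ ?_
    · rintro ⟨x, w⟩ h
      rw [mem_filter, HasAntidiagonal.mem_antidiagonal]
      refine ⟨?_, ⟨_, rfl⟩, _, rfl⟩
      obtain ⟨h1, h2⟩ := hT x w h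
      have h3 := ((memF x w).mp h).1
      simp only [M] at h3
      have : (24 : ℤ) * ((T (x, w)).1 + (T (x, w)).2) = 24 * e := by linarith
      omega
    · rintro ⟨x, w⟩ h ⟨x', w'⟩ h' heq
      obtain ⟨h1, h2⟩ := hT x w h
      obtain ⟨h1', h2'⟩ := hT x' w' h'
      rw [heq] at h1 h2
      have h3 := ((memF x w).mp h).2
      have h3' := ((memF x' w').mp h').2
      have a := sq_eq_sq_iff_eq_or_eq_neg.mp (h1.symm.trans h1')
      have b := sq_eq_sq_iff_eq_or_eq_neg.mp
        (mul_left_cancel₀ (by norm_num) (h2.symm.trans h2'))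
      rw [Prod.mk.injEq]
      omega
    · rintro ⟨a, b⟩ h
      rw [mem_filter, HasAntidiagonal.mem_antidiagonal] at h
      obtain ⟨hab, ⟨j, rfl⟩, k, rfl⟩ := h
      simp only at hab
      have h1 := tri j
      have h2 := pen k
      obtain ⟨s, hs⟩ : ∃ s : ℤ, (6 * k - 1 + 4 * s) ^ 2 = (2 * (j : ℤ) + 1) ^ 2 := by
        rcases (by omega : (2 * (j : ℤ) + 1 - (6 * k - 1)) % 4 = 0 ∨
          (-(2 * (j : ℤ) + 1) - (6 * k - 1)) % 4 = 0) with h | h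
        · exact ⟨(2 * (j : ℤ) + 1 - (6 * k - 1)) / 4, by congr 1; omega⟩
        · exact ⟨(-(2 * (j : ℤ) + 1) - (6 * k - 1)) / 4, by
            rw [← neg_sq (2 * (j : ℤ) + 1)]; congr 1; omega⟩
      have h3 : (6 * k - 1) ^ 2 + 3 * s * (6 * k - 1) + 6 * s ^ 2 = M := by
        zify at hab
        simp only [M]
        push_cast at *
        linarith
      obtain ⟨w, rfl⟩ : ∃ w, s = 2 * w := by
        rcases Int.even_or_odd' s with ⟨c, rfl | rfl⟩
        · exact ⟨c, rfl⟩
        · exfalso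
          have : M % 2 = 1 := by simp only [M]; omega
          rw [← h3, show (6 * k - 1) ^ 2 + 3 * (2 * c + 1) * (6 * k - 1) + 6 * (2 * c + 1) ^ 2 =
            2 * (18 * k ^ 2 + 3 * k + 18 * c * k - 3 * c - 1 + 3 * (2 * c + 1) ^ 2) by ring] at this
          omega
      have hm : (6 * k - 1 + 3 * w, w) ∈ F := by
        rw [memF]
        exact ⟨by linarith, by omega⟩
      refine ⟨_, hm, ?_⟩
      obtain ⟨h4, h5⟩ := hT _ _ hm
      rw [show 6 * k - 1 + 3 * w + 5 * w = 6 * k - 1 + 4 * (2 * w) by ring, hs] at h4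
      rw [show 6 * k - 1 + 3 * w - 3 * w = 6 * k - 1 by ring] at h5
      ext <;> simp only <;> omega
  rw [← hcard, ← ZMod.natCast_eq_zero_iff_even, card_eq_sum_ones, Nat.cast_sum]
  refine sum_involution (fun z _ ↦ (z.1, -z.2)) ?_ ?_ ?_ ?_
  · intros; decide
  · rintro ⟨x, w⟩ h - heq
    obtain ⟨h1, -⟩ := (memF x w).mp h
    simp only [Prod.mk.injEq, true_and] at heq
    obtain rfl : w = 0 := by omega
    have h2 : (x ^ 2) % 4 = 3 := by simp only [M] at h1; omega
    rcases Int.even_or_odd' x with ⟨c, rfl | rfl⟩ <;> ring_nf at h2 <;> omega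
  · rintro ⟨x, w⟩ h
    obtain ⟨h1, h2⟩ := (memF x w).mp h
    exact (memF _ _).mpr ⟨by linarith, by omega⟩
  · simp

lemma coeff_cube_mul_expand (e : ℕ) (he : e % 4 = 2) :
    (pentagonalSeries (ZMod 2) ^ 3 *
      (pentagonalSeries (ZMod 2)).expand 5 (by norm_num)).coeff e = 0 := by
  classical
  have h1 : ∀ d, (pentagonalSeries (ZMod 2) ^ 3).coeff d =
      if ∃ j : ℕ, d = j * (j + 1) / 2 then 1 else 0 := by
    intro d
    rw [coeff_pentagonal_cube]
    have h2 : ∀ j : ℕ, (-1 : ZMod 2) ^ j * (2 * j + 1) = 1 := fun j ↦ by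
      rw [show (-1 : ZMod 2) = 1 from rfl, show (2 : ZMod 2) = 0 from rfl]; simp
    simp only [h2]
    split_ifs with h
    · obtain ⟨j, hj⟩ := h
      rw [sum_eq_single j, if_pos hj]
      · intro i _ hi
        refine if_neg fun h ↦ hi ?_
        have a1 := half_mul_succ i
        have a2 := half_mul_succ j
        rw [← h] at a1
        rw [← hj] at a2
        nlinarith
      · intro h
        have := half_mul_succ j
        simp only [mem_range, not_lt] at h
        nlinarith
    · exact sum_eq_zero fun j _ ↦ if_neg fun hj ↦ h ⟨j, hj⟩
  have h2 : ∀ d, ((pentagonalSeries (ZMod 2)).expand 5 (by norm_num)).coeff d =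
      if ∃ k : ℤ, d = 5 * pentagonal k then 1 else 0 := by
    intro d
    split_ifs with h
    · obtain ⟨k, rfl⟩ := h
      rw [coeff_expand_mul, coeff_pentagonalSeries_pentagonal]
      rcases Int.even_or_odd k with hk | hk
      · simp [Int.negOnePow_even k hk]
      · simp [Int.negOnePow_odd k hk]
    · by_cases h5 : 5 ∣ d
      · obtain ⟨c, rfl⟩ := h5
        rw [coeff_expand_mul, coeff_pentagonalSeries_eq_zero]
        rintro ⟨k, rfl⟩
        exact h ⟨k, rfl⟩
      · exact coeff_expand_of_not_dvd _ _ _ h5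
  rw [coeff_mul]
  simp only [h1, h2, mul_ite, mul_one, mul_zero, ← ite_and]
  rw [sum_boole, ZMod.natCast_eq_zero_iff_even]
  rw [filter_congr fun p _ ↦ and_comm]
  convert even_card_rep e he

lemma two_dvd (n t : ℕ) : ((B 5 (20 * t + 1) (20 * n + 14) : ℕ) : ZMod 2) = 0 := by
  set E := pentagonalSeries (ZMod 2)
  set g := regGF (ZMod 2) 5
  have hg : g * E = E.expand 5 (by norm_num) := regGF_mul _
  have h4 : ∀ f : (ZMod 2)⟦X⟧, f.expand 4 (by norm_num) = f ^ 4 := fun f ↦ by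
    rw [show f ^ 4 = (f ^ 2) ^ 2 by ring, ← expand_eq_pow 2 (by norm_num),
      ← expand_eq_pow 2 (by norm_num)]
    exact expand_mul 2 _ 2 _ f
  obtain ⟨u, hu⟩ := (isUnit_pentagonalSeries (R := ZMod 2)).exists_right_inv
  have key : g ^ (20 * t + 1) =
      (E ^ 3 * E.expand 5 (by norm_num)) * (g ^ (5 * t) * u).expand 4 (by norm_num) := by
    rw [h4, ← hg]
    calc g ^ (20 * t + 1) = g ^ (20 * t + 1) * (E * u) ^ 4 := by rw [hu]; simp
      _ = _ := by ring
  rw [B_eq_coeff_s10, key]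
  exact coeff_mul_expand_eq_zero 4 2 _ _ _ coeff_cube_mul_expand _ (by omega)
end

theorem stmt_10 (n t : ℕ) :
    B 5 (20 * t + 1) (20 * n + 14) ≡ 0 [MOD 10] := by
  rw [Nat.modEq_zero_iff_dvd]
  have h2 := (ZMod.natCast_eq_zero_iff _ _).mp (two_dvd n t)
  have h5 := (ZMod.natCast_eq_zero_iff _ _).mp (five_dvd n t)
  omega
end
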